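/- Let δ > 0 and let u ∈ C²(S² ∩ B_δ(S) \ {S}) be a (−1)-homogeneous axisymmetric solution of the stationary Navier–Stokes equations, and let τ := lim_{x∈S², x→S} |x'| u_θ(x) (which exists and is finite). If 2 < τ < 3, then either |x'| u_φ is constant on S² near S, or the limit lim_{x∈S², x→S} |x'|^{τ−1} u_φ(x) exists, is finite, and is nonzero. Moreover, lim_{x∈S², x→S} |x'|^{2τ−4} u_r(x) exists and is finite. -/

import Mathlib

noncomputable section

open Real Filter MeasureTheory Metric Topology
open scoped ENNReal InnerProductSpace

abbrev V3 := EuclideanSpace ℝ (Fin 3)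
abbrev V2 := EuclideanSpace ℝ (Fin 2)

/-- standard basis vector in `ℝ³` -/
def e3 (j : Fin 3) : V3 := EuclideanSpace.single j 1

/-- partial derivative `∂_j f` -/
def pd (j : Fin 3) (f : V3 → ℝ) (x : V3) : ℝ := fderiv ℝ f x (e3 j)

/-- Laplacian on `ℝ³` -/
def lap3 (f : V3 → ℝ) (x : V3) : ℝ := ∑ j, pd j (fun y => pd j f y) x

/-- stationary Navier–Stokes equations `-Δu + (u·∇)u + ∇p = 0`, `div u = 0` at `x` -/
def NSEq (u : V3 → V3) (p : V3 → ℝ) (x : V3) : Prop :=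
  (∀ i, - lap3 (fun z => u z i) x + (∑ j, u x j * pd j (fun z => u z i) x) + pd i p x = 0)
  ∧ (∑ j, pd j (fun z => u z j) x) = 0

/-- stationary Euler equations `(u·∇)u + ∇p = 0`, `div u = 0` at `x` -/
def EulerEq (u : V3 → V3) (p : V3 → ℝ) (x : V3) : Prop :=
  (∀ i, (∑ j, u x j * pd j (fun z => u z i) x) + pd i p x = 0)
  ∧ (∑ j, pd j (fun z => u z j) x) = 0

/-- south pole -/
def S3 : V3 := EuclideanSpace.single 2 (-1)
/-- north pole -/
def N3 : V3 := EuclideanSpace.single 2 1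

/-- the unit sphere `S²` -/
def sphere2 : Set V3 := Metric.sphere (0 : V3) 1

/-- the open cone over a subset of the unit sphere -/
def cone3 (Ω : Set V3) : Set V3 := {x : V3 | x ≠ 0 ∧ (‖x‖⁻¹ • x) ∈ Ω}

/-- `|x'| = √(x₁² + x₂²)` -/
def rho (x : V3) : ℝ := Real.sqrt ((x 0) ^ 2 + (x 1) ^ 2)

/-- the `x₃`-axis `{x' = 0}` -/
def axis3 : Set V3 := {x : V3 | x 0 = 0 ∧ x 1 = 0}

/-- `Ω_{a,b,R} = {a < x₃ < b, |x'| < R}` -/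
def OmegaR (a b R : ℝ) : Set V3 := {x : V3 | a < x 2 ∧ x 2 < b ∧ rho x < R}

/-- build a point of `ℝ³` from `x' ∈ ℝ²` and `x₃ ∈ ℝ` -/
def emb (y : V2) (t : ℝ) : V3 := (EuclideanSpace.equiv (Fin 3) ℝ).symm ![y 0, y 1, t]

/-- spherical component `u_r = u · e_r` -/
def uRc (u : V3 → V3) (x : V3) : ℝ := (u x 0 * x 0 + u x 1 * x 1 + u x 2 * x 2) / ‖x‖

/-- spherical component `u_θ = u · e_θ` -/
def uTc (u : V3 → V3) (x : V3) : ℝ :=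
  (u x 0 * x 0 * x 2 + u x 1 * x 1 * x 2) / (‖x‖ * rho x) - u x 2 * rho x / ‖x‖

/-- spherical component `u_φ = u · e_φ` -/
def uPc (u : V3 → V3) (x : V3) : ℝ := (-(u x 0) * x 1 + u x 1 * x 0) / rho x

/-- axisymmetry on a set: the spherical components are independent of the meridian angle -/
def AxisymOn (u : V3 → V3) (Ω : Set V3) : Prop :=
  ∀ x ∈ Ω, ∀ y ∈ Ω, ‖x‖ = ‖y‖ → x 2 = y 2 →
    uRc u x = uRc u y ∧ uTc u x = uTc u y ∧ uPc u x = uPc u y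

/-- spherical frame vector `e_r` -/
def eRv (x : V3) : V3 := ‖x‖⁻¹ • x

/-- spherical frame vector `e_θ` -/
def eThv (x : V3) : V3 := (EuclideanSpace.equiv (Fin 3) ℝ).symm
  ![x 2 * x 0 / (‖x‖ * rho x), x 2 * x 1 / (‖x‖ * rho x), -(rho x) / ‖x‖]

/-- spherical frame vector `e_φ` -/
def ePhv (x : V3) : V3 := (EuclideanSpace.equiv (Fin 3) ℝ).symm ![-(x 1) / rho x, x 0 / rho x, 0]

/-- the spherical cap `S² ∩ B_δ(S) \ {S}` -/
def NSCap (δ : ℝ) : Set V3 := (sphere2 ∩ Metric.ball S3 δ) \ {S3}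

/-- the spherical cap `S² ∩ B_δ(S)` -/
def NSCapFull (δ : ℝ) : Set V3 := sphere2 ∩ Metric.ball S3 δ

/-!
Put `s = 1 + cos θ`. Homogeneity and axial symmetry turn `U = |x'| u_θ`, `f = r u_r` and
`γ = |x'| u_φ` into functions of `s`, and incompressibility becomes `U' = f`. The derivative of the
pressure along a circle of latitude is constant, hence zero by periodicity, which leaves
`s (2 - s) γ'' + U γ' = 0`. Eliminating the pressure from the other two momentum equations leaves
`J''' = -2 γ γ' / (s (2 - s))` for the first integral `J = s (2 - s) U' + 2 (s - 1) U + U² / 2`.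

As `U → τ`, the swirl equation gives `γ' = O(s ^ (-a))` for every `a > τ / 2`. Because `τ < 3` one
may take `a < 3 / 2`; integrating three times then gives `J = J(0) + O(s ^ (3 - 2 a))`, and `J(0)`
is the value for which `U` stays bounded. The Riccati equation for `U - τ` has a regular singular
point with positive exponent `(τ - 2) / 2`, so `U - τ = O(s ^ (3 - 2 a))`. With this rate the
coefficient of the swirl equation is `τ / (2 s)` up to an integrable error: either `γ' = 0` or
`γ' ~ L s ^ (-τ / 2)` with `L ≠ 0`. Running the estimates again with `a = τ / 2` gives the limit of
`s ^ (τ - 2) f`, and `|x'|² = s (2 - s)` on the sphere.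
-/

/-! ### Comparison of derivatives near an endpoint -/

lemma abs_sub_le_sub_of_abs_deriv_le {D : Set ℝ} (hD : Convex ℝ D)
    {h h' g g' : ℝ → ℝ} (hh : ∀ s ∈ D, HasDerivAt h (h' s) s)
    (hg : ∀ s ∈ D, HasDerivAt g (g' s) s) (hle : ∀ s ∈ D, |h' s| ≤ g' s)
    {x y : ℝ} (hx : x ∈ D) (hy : y ∈ D) (hxy : x ≤ y) :
    |h y - h x| ≤ g y - g x := by
  have mono {F F' : ℝ → ℝ} (hF : ∀ s ∈ D, HasDerivAt F (F' s) s) (hF' : ∀ s ∈ D, 0 ≤ F' s) :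
      F x ≤ F y := by
    refine monotoneOn_of_hasDerivWithinAt_nonneg hD
      (fun s hs => (hF s hs).continuousAt.continuousWithinAt) (f' := F')
      (fun s hs => (hF s (interior_subset hs)).hasDerivWithinAt)
      (fun s hs => hF' s (interior_subset hs)) hx hy hxy
  have hsub := mono (fun s hs => (hg s hs).sub (hh s hs))
    fun s hs => sub_nonneg.2 (abs_le.1 (hle s hs)).2
  have hadd := mono (fun s hs => (hg s hs).add (hh s hs))
    fun s hs => by linarith [(abs_le.1 (hle s hs)).1]
  simp only [Pi.sub_apply, Pi.add_apply] at hsub hadd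
  exact abs_le.2 ⟨by linarith, by linarith⟩

lemma isLittleO_of_deriv_isLittleO {f f' g g' : ℝ → ℝ} {a : ℝ}
    (hf : ∀ᶠ s in 𝓝[>] a, HasDerivAt f (f' s) s) (hg : ∀ᶠ s in 𝓝[>] a, HasDerivAt g (g' s) s)
    (hneg : ∀ᶠ s in 𝓝[>] a, g' s < 0) (htop : Tendsto g (𝓝[>] a) atTop)
    (hlo : f' =o[𝓝[>] a] g') : f =o[𝓝[>] a] g := by
  refine Asymptotics.isLittleO_iff.2 fun ε hε => ?_
  obtain ⟨c, hac, hc⟩ := (nhdsGT_basis a).eventually_iff.1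
    (hf.and (hg.and (hneg.and (hlo.def (half_pos hε)))))
  obtain ⟨s₀, hs₀⟩ := exists_between hac
  have increment {s : ℝ} (hs : s ∈ Set.Ioo a s₀) :
      |f s₀ - f s| ≤ -(ε / 2) * g s₀ - -(ε / 2) * g s := by
    refine abs_sub_le_sub_of_abs_deriv_le (convex_Ioo a c)
      (fun x hx => (hc hx).1) (fun x hx => (hc hx).2.1.const_mul (-(ε / 2))) (fun x hx => ?_)
      ⟨hs.1, hs.2.trans hs₀.2⟩ hs₀ hs.2.le
    obtain ⟨-, -, hx_neg, hx_le⟩ := hc hx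
    rw [norm_eq_abs, norm_eq_abs, abs_of_neg hx_neg] at hx_le
    linarith
  filter_upwards [Ioo_mem_nhdsGT hs₀.1,
    htop.eventually_ge_atTop (max 0 ((|f s₀| - ε / 2 * g s₀) / (ε / 2)))] with s hs hgs
  have hpos := (le_max_left _ _).trans hgs
  have hlarge := (div_le_iff₀ (half_pos hε)).1 ((le_max_right _ _).trans hgs)
  rw [norm_eq_abs, norm_eq_abs, abs_of_nonneg hpos]
  linarith [increment hs, abs_sub_abs_le_abs_sub (f s) (f s₀), abs_sub_comm (f s) (f s₀)]

theorem tendsto_div_of_tendsto_deriv_div_atTop {f f' g g' : ℝ → ℝ} {a l : ℝ}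
    (hf : ∀ᶠ s in 𝓝[>] a, HasDerivAt f (f' s) s) (hg : ∀ᶠ s in 𝓝[>] a, HasDerivAt g (g' s) s)
    (hneg : ∀ᶠ s in 𝓝[>] a, g' s < 0) (htop : Tendsto g (𝓝[>] a) atTop)
    (hl : Tendsto (fun s => f' s / g' s) (𝓝[>] a) (𝓝 l)) :
    Tendsto (fun s => f s / g s) (𝓝[>] a) (𝓝 l) := by
  have hlo : (fun s => f' s - l * g' s) =o[𝓝[>] a] g' := by
    refine (Asymptotics.isLittleO_iff_tendsto' (hneg.mono fun s hs h0 => absurd h0 hs.ne)).2 ?_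
    refine (sub_self l ▸ hl.sub_const l).congr' (hneg.mono fun s hs => ?_)
    simp only [sub_div, mul_div_cancel_right₀ _ hs.ne]
  have hquot := (isLittleO_of_deriv_isLittleO (f := fun s => f s - l * g s)
    (by filter_upwards [hf, hg] with s h₁ h₂ using h₁.sub (h₂.const_mul l))
    hg hneg htop hlo).tendsto_div_nhds_zero
  refine (zero_add l ▸ hquot.add_const l).congr' ?_
  filter_upwards [htop.eventually_gt_atTop 0] with s hs
  rw [sub_div, mul_div_cancel_right₀ _ hs.ne', sub_add_cancel]

lemma exists_tendsto_of_abs_deriv_le {h h' g g' : ℝ → ℝ} {a g₀ : ℝ}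
    (hh : ∀ᶠ s in 𝓝[>] a, HasDerivAt h (h' s) s) (hg : ∀ᶠ s in 𝓝[>] a, HasDerivAt g (g' s) s)
    (hle : ∀ᶠ s in 𝓝[>] a, |h' s| ≤ g' s) (hlim : Tendsto g (𝓝[>] a) (𝓝 g₀)) :
    ∃ h₀, Tendsto h (𝓝[>] a) (𝓝 h₀) := by
  obtain ⟨c, hac, hc⟩ := (nhdsGT_basis a).eventually_iff.1 (hh.and (hg.and hle))
  have increment {x y : ℝ} (hx : x ∈ Set.Ioo a c) (hy : y ∈ Set.Ioo a c) :
      |h x - h y| ≤ |g x - g y| := by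
    wlog hxy : x ≤ y generalizing x y
    · rw [abs_sub_comm, abs_sub_comm (g x)]
      exact this hy hx (le_of_not_ge hxy)
    rw [abs_sub_comm, abs_sub_comm (g x)]
    exact (abs_sub_le_sub_of_abs_deriv_le (convex_Ioo a c) (fun s hs => (hc hs).1)
      (fun s hs => (hc hs).2.1) (fun s hs => (hc hs).2.2) hx hy hxy).trans (le_abs_self _)
  refine cauchy_map_iff_exists_tendsto.1 (Metric.cauchy_iff.2 ⟨inferInstance, fun ε hε => ?_⟩)
  obtain ⟨t, ht, htε⟩ := (Metric.cauchy_iff.1 hlim.cauchy_map).2 ε hε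
  refine ⟨h '' (g ⁻¹' t ∩ Set.Ioo a c),
    image_mem_map (inter_mem ht (Ioo_mem_nhdsGT hac)), ?_⟩
  rintro _ ⟨x, ⟨hxt, hx⟩, rfl⟩ _ ⟨y, ⟨hyt, hy⟩, rfl⟩
  exact (increment hx hy).trans_lt (htε _ hxt _ hyt)

/-! ### Power asymptotics at `0⁺` -/

lemma tendsto_rpow_nhdsGT_zero {b : ℝ} (hb : 0 < b) :
    Tendsto (fun s : ℝ => s ^ b) (𝓝[>] 0) (𝓝 0) := by
  simpa only [zero_rpow hb.ne'] using
    (continuousAt_rpow_const 0 b (Or.inr hb.le)).tendsto.mono_left nhdsWithin_le_nhds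

lemma eventually_hasDerivAt_rpow (b : ℝ) :
    ∀ᶠ s in 𝓝[>] (0 : ℝ), HasDerivAt (fun s : ℝ => s ^ b) (b * s ^ (b - 1)) s := by
  filter_upwards [self_mem_nhdsWithin] with s (hs : 0 < s)
  exact hasDerivAt_rpow_const (Or.inl hs.ne')

section PowerAsymptotics

variable {h h' : ℝ → ℝ} {b l : ℝ}

lemma tendsto_rpow_mul_of_deriv (hb : 1 < b) (hh : ∀ᶠ s in 𝓝[>] (0 : ℝ), HasDerivAt h (h' s) s)
    (hl : Tendsto (fun s => s ^ b * h' s) (𝓝[>] 0) (𝓝 l)) :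
    Tendsto (fun s => s ^ (b - 1) * h s) (𝓝[>] 0) (𝓝 (l / (1 - b))) := by
  have hb' : 1 - b < 0 := by linarith
  refine (tendsto_div_of_tendsto_deriv_div_atTop hh (eventually_hasDerivAt_rpow (1 - b)) ?_
    (tendsto_rpow_neg_nhdsGT_zero hb') ?_).congr' ?_
  · filter_upwards [self_mem_nhdsWithin] with s hs
    exact mul_neg_of_neg_of_pos hb' (rpow_pos_of_pos hs _)
  · refine (hl.div_const (1 - b)).congr' ?_
    filter_upwards [self_mem_nhdsWithin] with s hs
    rw [show 1 - b - 1 = -b by ring, rpow_neg (le_of_lt hs)]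
    field_simp
  · filter_upwards [self_mem_nhdsWithin] with s hs
    rw [← neg_sub b 1, rpow_neg (le_of_lt hs), div_inv_eq_mul, mul_comm]

lemma exists_tendsto_of_tendsto_rpow_mul_deriv (hb : b < 1)
    (hh : ∀ᶠ s in 𝓝[>] (0 : ℝ), HasDerivAt h (h' s) s)
    (hl : Tendsto (fun s => s ^ b * h' s) (𝓝[>] 0) (𝓝 l)) :
    ∃ h₀, Tendsto h (𝓝[>] 0) (𝓝 h₀) := by
  have hb' : 0 < 1 - b := sub_pos.2 hb
  refine exists_tendsto_of_abs_deriv_le hh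
    ((eventually_hasDerivAt_rpow (1 - b)).mono fun s hs => hs.const_mul ((|l| + 1) / (1 - b))) ?_
    ((tendsto_rpow_nhdsGT_zero hb').const_mul _)
  filter_upwards [self_mem_nhdsWithin, hl.abs.eventually (gt_mem_nhds (lt_add_one |l|))]
    with s hs hbound
  have hpow := rpow_pos_of_pos hs b
  rw [abs_mul, abs_of_pos hpow] at hbound
  rw [← mul_assoc, div_mul_cancel₀ _ hb'.ne', show 1 - b - 1 = -b by ring,
    rpow_neg (le_of_lt hs), ← div_eq_mul_inv, le_div_iff₀ hpow]
  linarith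

lemma exists_tendsto_rpow_mul_sub_of_deriv (hb : b < 1)
    (hh : ∀ᶠ s in 𝓝[>] (0 : ℝ), HasDerivAt h (h' s) s)
    (hl : Tendsto (fun s => s ^ b * h' s) (𝓝[>] 0) (𝓝 l)) :
    ∃ h₀, Tendsto h (𝓝[>] 0) (𝓝 h₀) ∧
      Tendsto (fun s => s ^ (b - 1) * (h s - h₀)) (𝓝[>] 0) (𝓝 (l / (1 - b))) := by
  have hb' : 0 < 1 - b := sub_pos.2 hb
  obtain ⟨h₀, hlim⟩ := exists_tendsto_of_tendsto_rpow_mul_deriv hb hh hl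
  refine ⟨h₀, hlim, (HasDerivAt.lhopital_zero_nhdsGT (hh.mono fun s hs => hs.sub_const h₀)
    (eventually_hasDerivAt_rpow (1 - b)) ?_ (sub_self h₀ ▸ hlim.sub_const h₀)
    (tendsto_rpow_nhdsGT_zero hb') ?_).congr' ?_⟩
  · filter_upwards [self_mem_nhdsWithin] with s hs
    exact (mul_pos hb' (rpow_pos_of_pos hs _)).ne'
  · refine (hl.div_const (1 - b)).congr' ?_
    filter_upwards [self_mem_nhdsWithin] with s hs
    rw [show 1 - b - 1 = -b by ring, rpow_neg (le_of_lt hs)]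
    field_simp
  · filter_upwards [self_mem_nhdsWithin] with s hs
    rw [← neg_sub b 1, rpow_neg (le_of_lt hs), div_inv_eq_mul, mul_comm]

lemma tendsto_div_log_of_tendsto_mul_deriv
    (hh : ∀ᶠ s in 𝓝[>] (0 : ℝ), HasDerivAt h (h' s) s)
    (hl : Tendsto (fun s => s * h' s) (𝓝[>] 0) (𝓝 l)) :
    Tendsto (fun s => h s / log s) (𝓝[>] 0) (𝓝 l) := by
  refine (tendsto_div_of_tendsto_deriv_div_atTop (f := fun s => -h s) (g := fun s => -log s)
    (hh.mono fun s hs => hs.neg) (g' := fun s => -s⁻¹) ?_ ?_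
    (tendsto_neg_atBot_atTop.comp tendsto_log_nhdsGT_zero) ?_).congr fun s => neg_div_neg_eq _ _
  · filter_upwards [self_mem_nhdsWithin] with s (hs : 0 < s) using (hasDerivAt_log hs.ne').neg
  · filter_upwards [self_mem_nhdsWithin] with s (hs : 0 < s) using neg_neg_of_pos (inv_pos.2 hs)
  · refine hl.congr fun s => ?_
    rw [neg_div_neg_eq, div_inv_eq_mul, mul_comm]

lemma eq_zero_of_tendsto_of_tendsto_mul_deriv {h₀ : ℝ}
    (hh : ∀ᶠ s in 𝓝[>] (0 : ℝ), HasDerivAt h (h' s) s) (hlim : Tendsto h (𝓝[>] 0) (𝓝 h₀))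
    (hl : Tendsto (fun s => s * h' s) (𝓝[>] 0) (𝓝 l)) : l = 0 :=
  tendsto_nhds_unique (tendsto_div_log_of_tendsto_mul_deriv hh hl)
    (hlim.div_atBot tendsto_log_nhdsGT_zero)

end PowerAsymptotics

/-! ### Linear first-order equations with a regular singular point -/

lemma exists_eventually_hasDerivAt {k : ℝ → ℝ} {a : ℝ}
    (hk : ∀ᶠ s in 𝓝[>] a, ContinuousAt k s) :
    ∃ Φ : ℝ → ℝ, ∀ᶠ s in 𝓝[>] a, HasDerivAt Φ (k s) s := by
  obtain ⟨c, hac, hc⟩ := (nhdsGT_basis a).eventually_iff.1 hk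
  obtain ⟨s₀, hs₀⟩ := exists_between hac
  have hcont : ContinuousOn k (Set.Ioo a c) := fun s hs => (hc hs).continuousWithinAt
  refine ⟨fun s => ∫ x in s₀..s, k x, ?_⟩
  filter_upwards [Ioo_mem_nhdsGT hac] with s hs
  exact intervalIntegral.integral_hasDerivAt_right
    (hcont.mono (Set.ordConnected_Ioo.uIcc_subset hs₀ hs)).intervalIntegrable
    (hcont.stronglyMeasurableAtFilter isOpen_Ioo s hs) (hc hs)

section LinearODE

variable {y k : ℝ → ℝ}

lemma exists_eventually_eq_mul_exp_neg {Φ : ℝ → ℝ} {a : ℝ}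
    (hy : ∀ᶠ s in 𝓝[>] a, HasDerivAt y (-(k s * y s)) s)
    (hΦ : ∀ᶠ s in 𝓝[>] a, HasDerivAt Φ (k s) s) :
    ∃ C, ∀ᶠ s in 𝓝[>] a, y s = C * exp (-Φ s) := by
  obtain ⟨c, hac, hc⟩ := (nhdsGT_basis a).eventually_iff.1 (hy.and hΦ)
  obtain ⟨s₀, hs₀⟩ := exists_between hac
  have hderiv : ∀ s ∈ Set.Ioo a c, HasDerivAt (fun s => y s * exp (Φ s)) 0 s := fun s hs =>
    ((hc hs).1.mul (hc hs).2.exp).congr_deriv (by ring)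
  refine ⟨y s₀ * exp (Φ s₀), ?_⟩
  filter_upwards [Ioo_mem_nhdsGT hac] with s hs
  have hconst : y s * exp (Φ s) = y s₀ * exp (Φ s₀) :=
    isOpen_Ioo.is_const_of_deriv_eq_zero isPreconnected_Ioo
      (fun s hs => (hderiv s hs).differentiableAt.differentiableWithinAt)
      (fun s hs => (hderiv s hs).deriv) hs hs₀
  rw [← hconst, mul_assoc, ← exp_add, add_neg_cancel, exp_zero, mul_one]

variable {κ : ℝ}

lemma tendsto_rpow_mul_zero_of_hasDerivAt_neg_mul {a : ℝ}
    (hk : ∀ᶠ s in 𝓝[>] (0 : ℝ), ContinuousAt k s)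
    (hy : ∀ᶠ s in 𝓝[>] (0 : ℝ), HasDerivAt y (-(k s * y s)) s)
    (hκ : Tendsto (fun s => s * k s) (𝓝[>] 0) (𝓝 κ)) (ha : κ < a) :
    Tendsto (fun s => s ^ a * y s) (𝓝[>] 0) (𝓝 0) := by
  obtain ⟨Φ, hΦ⟩ := exists_eventually_hasDerivAt hk
  obtain ⟨C, hC⟩ := exists_eventually_eq_mul_exp_neg hy hΦ
  have hexponent : Tendsto (fun s => log s * (a - Φ s / log s)) (𝓝[>] 0) atBot :=
    tendsto_log_nhdsGT_zero.atBot_mul_pos (sub_pos.2 ha)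
      ((tendsto_div_log_of_tendsto_mul_deriv hΦ hκ).const_sub a)
  refine (mul_zero C ▸ (tendsto_exp_atBot.comp hexponent).const_mul C).congr' ?_
  filter_upwards [hC, Ioo_mem_nhdsGT one_pos] with s hs hs01
  rw [hs, rpow_def_of_pos hs01.1, Function.comp_apply, mul_sub,
    mul_div_cancel₀ _ (log_neg hs01.1 hs01.2).ne, sub_eq_add_neg, exp_add]
  ring

theorem eventually_eq_zero_or_tendsto_rpow_mul_of_hasDerivAt_neg_mul {β l : ℝ} (hβ : β < 1)
    (hk : ∀ᶠ s in 𝓝[>] (0 : ℝ), ContinuousAt k s)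
    (hy : ∀ᶠ s in 𝓝[>] (0 : ℝ), HasDerivAt y (-(k s * y s)) s)
    (hl : Tendsto (fun s => s ^ β * (k s - κ / s)) (𝓝[>] 0) (𝓝 l)) :
    (∀ᶠ s in 𝓝[>] (0 : ℝ), y s = 0) ∨
      ∃ L, L ≠ 0 ∧ Tendsto (fun s => s ^ κ * y s) (𝓝[>] 0) (𝓝 L) := by
  obtain ⟨Φ, hΦ⟩ := exists_eventually_hasDerivAt hk
  obtain ⟨C, hC⟩ := exists_eventually_eq_mul_exp_neg hy hΦ
  have hreg : ∀ᶠ s in 𝓝[>] (0 : ℝ), HasDerivAt (fun s => Φ s - κ * log s) (k s - κ / s) s := by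
    filter_upwards [hΦ, self_mem_nhdsWithin] with s hs (hs0 : 0 < s)
    exact (hs.sub ((hasDerivAt_log hs0.ne').const_mul κ)).congr_deriv (by rw [div_eq_mul_inv])
  obtain ⟨Φ₀, hlim⟩ := exists_tendsto_of_tendsto_rpow_mul_deriv hβ hreg hl
  rcases eq_or_ne C 0 with rfl | hC0
  · exact Or.inl (hC.mono fun s hs => by rw [hs, zero_mul])
  refine Or.inr ⟨C * exp (-Φ₀), mul_ne_zero hC0 (exp_ne_zero _),
    ((continuous_exp.tendsto _).comp hlim.neg |>.const_mul C).congr' ?_⟩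
  filter_upwards [hC, self_mem_nhdsWithin] with s hs hs0
  rw [hs, rpow_def_of_pos hs0, Function.comp_apply, neg_sub, sub_eq_add_neg, exp_add, mul_comm κ]
  ring

end LinearODE

theorem tendsto_rpow_neg_mul_of_regular_singular {V q R : ℝ → ℝ} {b κ c : ℝ} (hb : 0 < b)
    (hκ : 0 < κ) (hqc : ∀ᶠ s in 𝓝[>] (0 : ℝ), ContinuousAt q s)
    (hV : ∀ᶠ s in 𝓝[>] (0 : ℝ), HasDerivAt V ((R s - q s * V s) / s) s)
    (hV0 : Tendsto V (𝓝[>] 0) (𝓝 0)) (hq : Tendsto q (𝓝[>] 0) (𝓝 κ))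
    (hR : Tendsto (fun s => s ^ (-b) * R s) (𝓝[>] 0) (𝓝 c)) :
    Tendsto (fun s => s ^ (-b) * V s) (𝓝[>] 0) (𝓝 (c / (κ + b))) := by
  have hpos : ∀ᶠ s in 𝓝[>] (0 : ℝ), 0 < s := self_mem_nhdsWithin
  have hcont : ∀ᶠ s in 𝓝[>] (0 : ℝ), ContinuousAt (fun s => q s / s) s := by
    filter_upwards [hqc, hpos] with s hs hs0 using hs.div continuousAt_id hs0.ne'
  obtain ⟨Ψ, hΨ⟩ := exists_eventually_hasDerivAt hcont
  have hexp : Tendsto (fun s => exp (Ψ s)) (𝓝[>] 0) (𝓝 0) := by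
    refine (tendsto_rpow_mul_zero_of_hasDerivAt_neg_mul (a := 0) (k := fun s => -(q s / s))
      (hcont.mono fun s hs => hs.neg) (hΨ.mono fun s hs => hs.exp.congr_deriv (by ring))
      (κ := -κ) (hq.neg.congr' ?_) (by linarith)).congr fun s => by rw [rpow_zero, one_mul]
    filter_upwards [hpos] with s hs
    field_simp
  refine (HasDerivAt.lhopital_zero_nhdsGT (f := fun s => exp (Ψ s) * V s)
    (f' := fun s => exp (Ψ s) * R s / s) (g := fun s => exp (Ψ s) * s ^ b)
    (g' := fun s => exp (Ψ s) * s ^ b * (q s + b) / s) ?_ ?_ ?_ (by simpa using hexp.mul hV0)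
    (by simpa using hexp.mul (tendsto_rpow_nhdsGT_zero hb)) ?_).congr' ?_
  · filter_upwards [hΨ, hV] with s h₁ h₂
    exact (h₁.exp.mul h₂).congr_deriv (by ring)
  · filter_upwards [hΨ, eventually_hasDerivAt_rpow b, hpos] with s h₁ h₂ hs
    refine (h₁.exp.mul h₂).congr_deriv ?_
    rw [rpow_sub_one hs.ne']
    ring
  · filter_upwards [hq.eventually (lt_mem_nhds hκ), hpos] with s hqs hs
    positivity
  · refine (hR.div (hq.add_const b) (by positivity)).congr' ?_
    filter_upwards [hpos] with s hs
    rw [Pi.div_apply, rpow_neg hs.le, div_div_div_cancel_right₀ hs.ne', mul_assoc,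
      mul_div_mul_left _ _ (exp_ne_zero _), inv_mul_eq_div, div_div]
  · filter_upwards [hpos] with s hs
    rw [mul_div_mul_left _ _ (exp_ne_zero _), rpow_neg hs.le, inv_mul_eq_div]

/-! ### The reduced system near the pole -/

/-- The first integral `J` of the reduced momentum equation, in the variable `s = 1 + cos θ`, where
`U = sin θ u_θ` and `f = u_r`. -/
def reducedHead (U f : ℝ → ℝ) (s : ℝ) : ℝ := s * (2 - s) * f s + 2 * (s - 1) * U s + U s ^ 2 / 2

/-- The germ at the south pole of the ordinary differential system satisfied by an axisymmetric
`(-1)`-homogeneous solution, in the variable `s = 1 + cos θ`: here `U = sin θ u_θ`, `f = u_r`,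
`γ = sin θ u_φ`, and `J₁`, `J₂` are the first two derivatives of `reducedHead U f`, so that the
momentum equation is of third order in `U`. -/
structure NearPoleSystem (τ : ℝ) (U f γ γ' J₁ J₂ : ℝ → ℝ) : Prop where
  hasDerivAt_polar : ∀ᶠ s in 𝓝[>] (0 : ℝ), HasDerivAt U (f s) s
  hasDerivAt_head : ∀ᶠ s in 𝓝[>] (0 : ℝ), HasDerivAt (reducedHead U f) (J₁ s) s
  hasDerivAt_head₁ : ∀ᶠ s in 𝓝[>] (0 : ℝ), HasDerivAt J₁ (J₂ s) s
  hasDerivAt_head₂ : ∀ᶠ s in 𝓝[>] (0 : ℝ), HasDerivAt J₂ (-(2 * γ s * γ' s / (s * (2 - s)))) s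
  hasDerivAt_swirl : ∀ᶠ s in 𝓝[>] (0 : ℝ), HasDerivAt γ (γ' s) s
  hasDerivAt_swirl' : ∀ᶠ s in 𝓝[>] (0 : ℝ), HasDerivAt γ' (-(U s / (s * (2 - s)) * γ' s)) s
  tendsto_polar : Tendsto U (𝓝[>] 0) (𝓝 τ)

lemma eventually_two_sub_pos : ∀ᶠ s in 𝓝[>] (0 : ℝ), 0 < s ∧ 0 < 2 - s := by
  filter_upwards [Ioo_mem_nhdsGT two_pos] with s hs using ⟨hs.1, sub_pos.2 hs.2⟩

lemma tendsto_id_nhdsGT_zero : Tendsto (fun s : ℝ => s) (𝓝[>] 0) (𝓝 0) :=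
  tendsto_id.mono_left nhdsWithin_le_nhds

lemma tendsto_two_sub_nhdsGT_zero : Tendsto (fun s : ℝ => 2 - s) (𝓝[>] 0) (𝓝 2) := by
  simpa only [sub_zero] using tendsto_id_nhdsGT_zero.const_sub (2 : ℝ)

lemma eventually_mul_radial_eq (U f : ℝ → ℝ) :
    ∀ᶠ s in 𝓝[>] (0 : ℝ),
      s * f s = (reducedHead U f s - 2 * (s - 1) * U s - U s ^ 2 / 2) / (2 - s) := by
  filter_upwards [eventually_two_sub_pos] with s hs
  rw [reducedHead, eq_div_iff hs.2.ne']
  ring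

lemma eventually_mul_radial_eq_sub (τ : ℝ) (U f : ℝ → ℝ) :
    ∀ᶠ s in 𝓝[>] (0 : ℝ), s * f s =
      (reducedHead U f s - (τ ^ 2 / 2 - 2 * τ) - 2 * s * U s) / (2 - s)
        - ((U s + τ) / 2 - 2) / (2 - s) * (U s - τ) := by
  filter_upwards [eventually_mul_radial_eq U f] with s hs
  rw [hs]
  ring

namespace NearPoleSystem

variable {τ : ℝ} {U f γ γ' J₁ J₂ : ℝ → ℝ} (h : NearPoleSystem τ U f γ γ' J₁ J₂)
include h

lemma eventually_continuousAt_polar : ∀ᶠ s in 𝓝[>] (0 : ℝ), ContinuousAt U s :=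
  h.hasDerivAt_polar.mono fun _ hs => hs.continuousAt

section SwirlBound

variable {a C : ℝ} (ha : 1 < a)

include ha in
lemma exists_tendsto_head₁ (hC : Tendsto (fun s => s ^ a * γ' s) (𝓝[>] 0) (𝓝 C)) :
    ∃ l, Tendsto (fun s => s ^ (2 * a - 2) * J₁ s) (𝓝[>] 0) (𝓝 l) := by
  have hswirl := tendsto_rpow_mul_of_deriv ha h.hasDerivAt_swirl hC
  have hsource : Tendsto (fun s => s ^ (2 * a) * -(2 * γ s * γ' s / (s * (2 - s)))) (𝓝[>] 0)
      (𝓝 (-(2 * (C / (1 - a)) * C / 2))) := by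
    refine (((hswirl.const_mul 2).mul hC).div tendsto_two_sub_nhdsGT_zero two_ne_zero).neg.congr' ?_
    filter_upwards [eventually_two_sub_pos] with s hs
    rw [Pi.div_apply, two_mul a, rpow_add hs.1, rpow_sub_one hs.1.ne']
    field_simp
  have hhead₂ := tendsto_rpow_mul_of_deriv (by linarith) h.hasDerivAt_head₂ hsource
  have hhead₁ := tendsto_rpow_mul_of_deriv (by linarith) h.hasDerivAt_head₁ hhead₂
  rw [show 2 * a - 1 - 1 = 2 * a - 2 by ring] at hhead₁
  exact ⟨_, hhead₁⟩

-- Otherwise `U' ~ c / s`, so that `U` would be unbounded.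
lemma head_limit_eq {J₀ : ℝ} (hJ : Tendsto (reducedHead U f) (𝓝[>] 0) (𝓝 J₀)) :
    J₀ = τ ^ 2 / 2 - 2 * τ := by
  have hlim : Tendsto (fun s => s * f s) (𝓝[>] 0)
      (𝓝 ((J₀ - 2 * (0 - 1) * τ - τ ^ 2 / 2) / 2)) :=
    (((hJ.sub (((tendsto_id_nhdsGT_zero.sub_const 1).const_mul 2).mul h.tendsto_polar)).sub
      ((h.tendsto_polar.pow 2).div_const 2)).div tendsto_two_sub_nhdsGT_zero two_ne_zero).congr'
      ((eventually_mul_radial_eq U f).mono fun s hs => hs.symm)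
  linarith [eq_zero_of_tendsto_of_tendsto_mul_deriv h.hasDerivAt_polar h.tendsto_polar hlim]

variable (ha' : a < 3 / 2)

include ha ha' in
lemma exists_tendsto_head_sub (hC : Tendsto (fun s => s ^ a * γ' s) (𝓝[>] 0) (𝓝 C)) :
    ∃ l, Tendsto (fun s => s ^ (2 * a - 3) * (reducedHead U f s - (τ ^ 2 / 2 - 2 * τ)))
      (𝓝[>] 0) (𝓝 l) := by
  obtain ⟨l, hl⟩ := h.exists_tendsto_head₁ ha hC
  obtain ⟨J₀, hJ, hrate⟩ :=
    exists_tendsto_rpow_mul_sub_of_deriv (by linarith) h.hasDerivAt_head hl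
  rw [h.head_limit_eq hJ, show 2 * a - 2 - 1 = 2 * a - 3 by ring] at hrate
  exact ⟨_, hrate⟩

lemma tendsto_polar_coefficient :
    Tendsto (fun s => ((U s + τ) / 2 - 2) / (2 - s)) (𝓝[>] 0) (𝓝 ((τ - 2) / 2)) := by
  have hlim := (((h.tendsto_polar.add_const τ).div_const 2).sub_const 2).div
    tendsto_two_sub_nhdsGT_zero two_ne_zero
  rwa [add_self_div_two] at hlim

include ha in
lemma tendsto_polar_source {l : ℝ}
    (hl : Tendsto (fun s => s ^ (2 * a - 3) * (reducedHead U f s - (τ ^ 2 / 2 - 2 * τ)))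
      (𝓝[>] 0) (𝓝 l)) :
    Tendsto (fun s => s ^ (2 * a - 3) *
      ((reducedHead U f s - (τ ^ 2 / 2 - 2 * τ) - 2 * s * U s) / (2 - s)))
      (𝓝[>] 0) (𝓝 ((l - 2 * (0 * τ)) / 2)) := by
  have hvanish := (tendsto_rpow_nhdsGT_zero (b := 2 * a - 2) (by linarith)).mul h.tendsto_polar
  refine ((hl.sub (hvanish.const_mul 2)).div tendsto_two_sub_nhdsGT_zero two_ne_zero).congr' ?_
  filter_upwards [self_mem_nhdsWithin] with s hs
  rw [Pi.div_apply, show 2 * a - 2 = 2 * a - 3 + 1 by ring, rpow_add_one (ne_of_gt hs)]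
  ring

include ha ha' in
lemma exists_tendsto_polar_sub (hτ : 2 < τ)
    (hC : Tendsto (fun s => s ^ a * γ' s) (𝓝[>] 0) (𝓝 C)) :
    ∃ l, Tendsto (fun s => s ^ (2 * a - 3) * (U s - τ)) (𝓝[>] 0) (𝓝 l) := by
  obtain ⟨l, hl⟩ := h.exists_tendsto_head_sub ha ha' hC
  have hsource := h.tendsto_polar_source ha hl
  rw [show 2 * a - 3 = -(3 - 2 * a) by ring] at hsource ⊢
  refine ⟨_, tendsto_rpow_neg_mul_of_regular_singular (by linarith) (by linarith) ?_ ?_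
    (by simpa using h.tendsto_polar.sub_const τ) h.tendsto_polar_coefficient hsource⟩
  · filter_upwards [h.eventually_continuousAt_polar, eventually_two_sub_pos] with s hU hs
    exact (((hU.add_const τ).div_const 2).sub_const 2).div
      (continuousAt_id.const_sub 2) hs.2.ne'
  · filter_upwards [h.hasDerivAt_polar, eventually_mul_radial_eq_sub τ U f, eventually_two_sub_pos]
      with s hU hf hs
    refine (hU.sub_const τ).congr_deriv ?_
    rw [eq_div_iff hs.1.ne', mul_comm, hf]

include ha ha' in
lemma exists_tendsto_radial (hτ : 2 < τ)
    (hC : Tendsto (fun s => s ^ a * γ' s) (𝓝[>] 0) (𝓝 C)) :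
    ∃ l, Tendsto (fun s => s ^ (2 * a - 2) * f s) (𝓝[>] 0) (𝓝 l) := by
  obtain ⟨l, hl⟩ := h.exists_tendsto_head_sub ha ha' hC
  obtain ⟨m, hm⟩ := h.exists_tendsto_polar_sub ha ha' hτ hC
  refine ⟨_, ((h.tendsto_polar_source ha hl).sub
    (h.tendsto_polar_coefficient.mul hm)).congr' ?_⟩
  filter_upwards [eventually_mul_radial_eq_sub τ U f, eventually_two_sub_pos] with s hf hs
  rw [show 2 * a - 2 = 2 * a - 3 + 1 by ring, rpow_add_one hs.1.ne']
  linear_combination -s ^ (2 * a - 3) * hf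

end SwirlBound

lemma eventually_continuousAt_swirl_coefficient :
    ∀ᶠ s in 𝓝[>] (0 : ℝ), ContinuousAt (fun s => U s / (s * (2 - s))) s := by
  filter_upwards [h.eventually_continuousAt_polar, eventually_two_sub_pos] with s hU hs
  exact hU.div (by fun_prop) (mul_pos hs.1 hs.2).ne'

lemma tendsto_rpow_mul_swirl'_zero {a : ℝ} (ha : τ / 2 < a) :
    Tendsto (fun s => s ^ a * γ' s) (𝓝[>] 0) (𝓝 0) := by
  refine tendsto_rpow_mul_zero_of_hasDerivAt_neg_mul h.eventually_continuousAt_swirl_coefficient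
    h.hasDerivAt_swirl'
    ((h.tendsto_polar.div tendsto_two_sub_nhdsGT_zero two_ne_zero).congr' ?_) ha
  filter_upwards [self_mem_nhdsWithin] with s hs
  rw [Pi.div_apply, mul_div_assoc', mul_div_mul_left _ _ (ne_of_gt hs)]

lemma swirl'_eq_zero_or_tendsto (hτ : 2 < τ) (hτ' : τ < 3) :
    (∀ᶠ s in 𝓝[>] (0 : ℝ), γ' s = 0) ∨
      ∃ L, L ≠ 0 ∧ Tendsto (fun s => s ^ (τ / 2) * γ' s) (𝓝[>] 0) (𝓝 L) := by
  obtain ⟨a, hτa, ha⟩ := exists_between (show τ / 2 < 3 / 2 by linarith)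
  have ha1 : 1 < a := by linarith
  obtain ⟨l, hl⟩ := h.exists_tendsto_polar_sub ha1 ha hτ (h.tendsto_rpow_mul_swirl'_zero hτa)
  refine eventually_eq_zero_or_tendsto_rpow_mul_of_hasDerivAt_neg_mul
    (β := 2 * a - 2) (by linarith) h.eventually_continuousAt_swirl_coefficient h.hasDerivAt_swirl'
    ((((hl.const_mul 2).add
      ((tendsto_rpow_nhdsGT_zero (b := 2 * a - 2) (by linarith)).const_mul τ)).div
      (tendsto_two_sub_nhdsGT_zero.const_mul 2) (by norm_num)).congr' ?_)
  filter_upwards [eventually_two_sub_pos] with s hs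
  obtain ⟨hs0, hs2⟩ := hs
  rw [Pi.div_apply, show 2 * a - 2 = 2 * a - 3 + 1 by ring, rpow_add_one hs0.ne']
  field_simp
  ring

theorem swirl_eq_const_or_tendsto (hτ : 2 < τ) (hτ' : τ < 3) :
    (∃ c, ∀ᶠ s in 𝓝[>] (0 : ℝ), γ s = c) ∨
      ∃ L, L ≠ 0 ∧ Tendsto (fun s => s ^ (τ / 2 - 1) * γ s) (𝓝[>] 0) (𝓝 L) := by
  rcases h.swirl'_eq_zero_or_tendsto hτ hτ' with hzero | ⟨L, hL, hlim⟩
  · obtain ⟨c, hc⟩ := exists_eventually_eq_mul_exp_neg (y := γ) (k := 0) (Φ := 0) (a := 0)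
      (by filter_upwards [h.hasDerivAt_swirl, hzero] with s hs h0
          simpa only [Pi.zero_apply, zero_mul, neg_zero, h0] using hs)
      (Eventually.of_forall fun s => hasDerivAt_const s 0)
    exact Or.inl ⟨c, by simpa only [Pi.zero_apply, neg_zero, exp_zero, mul_one] using hc⟩
  · exact Or.inr ⟨_, div_ne_zero hL (by linarith),
      tendsto_rpow_mul_of_deriv (by linarith) h.hasDerivAt_swirl hlim⟩

theorem exists_tendsto_rpow_mul_radial (hτ : 2 < τ) (hτ' : τ < 3) :
    ∃ L, Tendsto (fun s => s ^ (τ - 2) * f s) (𝓝[>] 0) (𝓝 L) := by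
  obtain ⟨C, hC⟩ : ∃ C, Tendsto (fun s => s ^ (τ / 2) * γ' s) (𝓝[>] 0) (𝓝 C) := by
    rcases h.swirl'_eq_zero_or_tendsto hτ hτ' with hzero | ⟨L, -, hlim⟩
    · exact ⟨0, tendsto_const_nhds.congr' (hzero.mono fun s hs => by simp only [hs, mul_zero])⟩
    · exact ⟨L, hlim⟩
  obtain ⟨L, hL⟩ := h.exists_tendsto_radial (by linarith) (by linarith) hτ hC
  exact ⟨L, by rwa [mul_div_cancel₀ τ two_ne_zero] at hL⟩

end NearPoleSystem

/-! ### Calculus of partial derivatives on `ℝ³` -/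

section PartialDerivatives

variable {F G : V3 → ℝ} {x : V3}

lemma pd_congr (h : F =ᶠ[𝓝 x] G) (j : Fin 3) : pd j F x = pd j G x := by
  rw [pd, pd, h.fderiv_eq]

lemma lap3_congr (h : F =ᶠ[𝓝 x] G) : lap3 F x = lap3 G x :=
  Finset.sum_congr rfl fun j _ =>
    pd_congr (h.eventuallyEq_nhds.mono fun _ hy => pd_congr hy j) j

lemma pd_add (hF : DifferentiableAt ℝ F x) (hG : DifferentiableAt ℝ G x) (j : Fin 3) :
    pd j (fun y => F y + G y) x = pd j F x + pd j G x := by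
  simp only [pd, fderiv_fun_add hF hG, add_apply]

lemma pd_sub (hF : DifferentiableAt ℝ F x) (hG : DifferentiableAt ℝ G x) (j : Fin 3) :
    pd j (fun y => F y - G y) x = pd j F x - pd j G x := by
  simp only [pd, fderiv_fun_sub hF hG, sub_apply]

lemma pd_mul (hF : DifferentiableAt ℝ F x) (hG : DifferentiableAt ℝ G x) (j : Fin 3) :
    pd j (fun y => F y * G y) x = F x * pd j G x + G x * pd j F x := by
  simp only [pd, fderiv_fun_mul hF hG, add_apply, smul_apply, smul_eq_mul]

lemma pd_comp {φ : ℝ → ℝ} (hφ : DifferentiableAt ℝ φ (F x)) (hF : DifferentiableAt ℝ F x)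
    (j : Fin 3) : pd j (fun y => φ (F y)) x = deriv φ (F x) * pd j F x := by
  have hchain : fderiv ℝ (fun y => φ (F y)) x = deriv φ (F x) • fderiv ℝ F x :=
    (hφ.hasDerivAt.comp_hasFDerivAt x hF.hasFDerivAt).fderiv
  rw [pd, hchain, smul_apply, smul_eq_mul, pd]

lemma eventually_differentiableAt_of_contDiffAt_two (hF : ContDiffAt ℝ 2 F x) :
    ∀ᶠ y in 𝓝 x, DifferentiableAt ℝ F y :=
  (hF.eventually (by simp)).mono fun _ hy => hy.differentiableAt two_ne_zero

lemma differentiableAt_pd (hF : ContDiffAt ℝ 2 F x) (j : Fin 3) :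
    DifferentiableAt ℝ (fun y => pd j F y) x :=
  ((hF.fderiv_right (m := 1) (by norm_num)).differentiableAt one_ne_zero).clm_apply
    (differentiableAt_const _)

lemma lap3_add (hF : ContDiffAt ℝ 2 F x) (hG : ContDiffAt ℝ 2 G x) :
    lap3 (fun y => F y + G y) x = lap3 F x + lap3 G x := by
  simp only [lap3, ← Finset.sum_add_distrib]
  refine Finset.sum_congr rfl fun j _ => ?_
  rw [← pd_add (differentiableAt_pd hF j) (differentiableAt_pd hG j)]
  refine pd_congr ?_ j
  filter_upwards [eventually_differentiableAt_of_contDiffAt_two hF,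
    eventually_differentiableAt_of_contDiffAt_two hG] with y h₁ h₂ using pd_add h₁ h₂ j

lemma lap3_mul (hF : ContDiffAt ℝ 2 F x) (hG : ContDiffAt ℝ 2 G x) :
    lap3 (fun y => F y * G y) x =
      F x * lap3 G x + 2 * ∑ j, pd j F x * pd j G x + G x * lap3 F x := by
  simp only [lap3, Finset.mul_sum, ← Finset.sum_add_distrib]
  refine Finset.sum_congr rfl fun j _ => ?_
  have hpd : (fun y => pd j (fun y => F y * G y) y) =ᶠ[𝓝 x]
      fun y => F y * pd j G y + G y * pd j F y := by
    filter_upwards [eventually_differentiableAt_of_contDiffAt_two hF,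
      eventually_differentiableAt_of_contDiffAt_two hG] with y h₁ h₂ using pd_mul h₁ h₂ j
  have hF₁ := hF.differentiableAt two_ne_zero
  have hG₁ := hG.differentiableAt two_ne_zero
  have hF₂ := differentiableAt_pd hF j
  have hG₂ := differentiableAt_pd hG j
  rw [pd_congr hpd, pd_add (hF₁.fun_mul hG₂) (hG₁.fun_mul hF₂), pd_mul hF₁ hG₂, pd_mul hG₁ hF₂]
  ring

lemma lap3_sub (hF : ContDiffAt ℝ 2 F x) (hG : ContDiffAt ℝ 2 G x) :
    lap3 (fun y => F y - G y) x = lap3 F x - lap3 G x := by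
  simp only [lap3, ← Finset.sum_sub_distrib]
  refine Finset.sum_congr rfl fun j _ => ?_
  rw [← pd_sub (differentiableAt_pd hF j) (differentiableAt_pd hG j)]
  refine pd_congr ?_ j
  filter_upwards [eventually_differentiableAt_of_contDiffAt_two hF,
    eventually_differentiableAt_of_contDiffAt_two hG] with y h₁ h₂ using pd_sub h₁ h₂ j

lemma differentiableAt_deriv_of_contDiffAt_two {φ : ℝ → ℝ} {t : ℝ} (hφ : ContDiffAt ℝ 2 φ t) :
    DifferentiableAt ℝ (deriv φ) t :=
  (hφ.derivWithin (m := 1) (by norm_num)).differentiableAt one_ne_zero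

lemma lap3_comp {φ : ℝ → ℝ} (hφ : ContDiffAt ℝ 2 φ (F x)) (hF : ContDiffAt ℝ 2 F x) :
    lap3 (fun y => φ (F y)) x =
      deriv (deriv φ) (F x) * ∑ j, pd j F x ^ 2 + deriv φ (F x) * lap3 F x := by
  simp only [lap3, Finset.mul_sum, ← Finset.sum_add_distrib]
  refine Finset.sum_congr rfl fun j _ => ?_
  have hF₁ := hF.differentiableAt two_ne_zero
  have hφ₁ : ∀ᶠ y in 𝓝 x, DifferentiableAt ℝ φ (F y) :=
    hF.continuousAt.eventually
      ((hφ.eventually (by simp)).mono fun _ ht => ht.differentiableAt two_ne_zero)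
  have hφ₂ := differentiableAt_deriv_of_contDiffAt_two hφ
  have hpd : (fun y => pd j (fun y => φ (F y)) y) =ᶠ[𝓝 x]
      fun y => deriv φ (F y) * pd j F y := by
    filter_upwards [hφ₁, eventually_differentiableAt_of_contDiffAt_two hF] with y h₁ h₂
      using pd_comp h₁ h₂ j
  rw [pd_congr hpd, pd_mul (F := fun y => deriv φ (F y)) (hφ₂.comp x hF₁)
    (differentiableAt_pd hF j), pd_comp hφ₂ hF₁]
  ring

end PartialDerivatives

lemma pd_const (j : Fin 3) (a : ℝ) (x : V3) : pd j (fun _ => a) x = 0 := by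
  rw [pd, fderiv_fun_const, Pi.zero_apply, zero_apply]

lemma contDiffAt_coord (i : Fin 3) (x : V3) : ContDiffAt ℝ 2 (fun y : V3 => y i) x := by
  fun_prop

lemma pd_coord (i j : Fin 3) (x : V3) :
    pd j (fun y : V3 => y i) x = if i = j then 1 else 0 := by
  have : fderiv ℝ (fun y : V3 => y i) x = (EuclideanSpace.proj i : V3 →L[ℝ] ℝ) :=
    (EuclideanSpace.proj i : V3 →L[ℝ] ℝ).hasFDerivAt.fderiv
  simp [pd, this, e3]

lemma lap3_coord (i : Fin 3) (x : V3) : lap3 (fun y : V3 => y i) x = 0 := by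
  simp only [lap3, pd_coord, pd_const, Finset.sum_const_zero]

lemma norm_sq_eq_sum (x : V3) : ‖x‖ ^ 2 = x 0 ^ 2 + x 1 ^ 2 + x 2 ^ 2 := by
  simp only [EuclideanSpace.norm_sq_eq, Fin.sum_univ_three, norm_eq_abs, sq_abs]

lemma pd_norm_sq (j : Fin 3) (x : V3) : pd j (fun y => ‖y‖ ^ 2) x = 2 * x j := by
  rw [pd, (hasStrictFDerivAt_norm_sq x).hasFDerivAt.fderiv]
  simp [e3, EuclideanSpace.inner_single_right]

section Norm

variable {x : V3} (hx : x ≠ 0)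
include hx

lemma pd_norm (j : Fin 3) : pd j (fun y => ‖y‖) x = x j / ‖x‖ := by
  have hd := (contDiffAt_norm (n := 2) ℝ hx).differentiableAt two_ne_zero
  have hsq := pd_norm_sq j x
  simp only [pow_two, pd_mul hd hd] at hsq
  rw [eq_div_iff (norm_ne_zero_iff.2 hx)]
  linarith

lemma sum_pd_norm_sq : ∑ j, pd j (fun y => ‖y‖) x * pd j (fun y => ‖y‖) x = 1 := by
  have hnorm := norm_ne_zero_iff.2 hx
  simp only [pd_norm hx, Fin.sum_univ_three]
  field_simp
  linarith [norm_sq_eq_sum x]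

lemma lap3_norm : lap3 (fun y => ‖y‖) x = 2 / ‖x‖ := by
  have hc := contDiffAt_norm (n := 2) ℝ hx
  have hsq : lap3 (fun y => ‖y‖ ^ 2) x = 6 := by
    simp only [lap3, pd_norm_sq]
    have (j : Fin 3) : pd j (fun y : V3 => 2 * y j) x = 2 := by
      rw [pd_mul (by fun_prop) (by fun_prop), pd_coord, pd_const]
      simp
    simp only [this, Finset.sum_const, Finset.card_univ, Fintype.card_fin]
    norm_num
  simp only [pow_two, lap3_mul hc hc, sum_pd_norm_sq hx] at hsq
  rw [eq_div_iff (norm_ne_zero_iff.2 hx)]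
  linarith

end Norm

/-- The cosine of the polar angle `θ` of a point of `ℝ³`. -/
def cosTheta (x : V3) : ℝ := x 2 / ‖x‖

section CosTheta

variable {x : V3} (hx : x ≠ 0)
include hx

lemma contDiffAt_cosTheta : ContDiffAt ℝ 2 cosTheta x :=
  (contDiffAt_coord 2 x).div (contDiffAt_norm ℝ hx) (norm_ne_zero_iff.2 hx)

lemma norm_mul_cosTheta : ‖x‖ * cosTheta x = x 2 :=
  mul_div_cancel₀ _ (norm_ne_zero_iff.2 hx)

lemma eventually_norm_mul_cosTheta : (fun y => ‖y‖ * cosTheta y) =ᶠ[𝓝 x] fun y => y 2 :=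
  (isOpen_ne.eventually_mem hx).mono fun _ hy => norm_mul_cosTheta hy

lemma pd_cosTheta (j : Fin 3) :
    pd j cosTheta x = ((if 2 = j then 1 else 0) - cosTheta x * (x j / ‖x‖)) / ‖x‖ := by
  have hprod := pd_congr (eventually_norm_mul_cosTheta hx) j
  rw [pd_mul ((contDiffAt_norm (n := 2) ℝ hx).differentiableAt two_ne_zero)
    ((contDiffAt_cosTheta hx).differentiableAt two_ne_zero), pd_norm hx, pd_coord] at hprod
  rw [← hprod, eq_div_iff (norm_ne_zero_iff.2 hx)]
  ring

lemma sum_pd_cosTheta_sq : ∑ j, pd j cosTheta x ^ 2 = (1 - cosTheta x ^ 2) / ‖x‖ ^ 2 := by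
  have hnorm := norm_ne_zero_iff.2 hx
  simp only [pd_cosTheta hx, Fin.sum_univ_three, cosTheta, Fin.reduceEq, ↓reduceIte]
  field_simp
  linear_combination (-x 2 ^ 2) * norm_sq_eq_sum x

lemma lap3_cosTheta : lap3 cosTheta x = -2 * cosTheta x / ‖x‖ ^ 2 := by
  have hnorm := norm_ne_zero_iff.2 hx
  have hprod := lap3_congr (eventually_norm_mul_cosTheta hx)
  rw [lap3_mul (contDiffAt_norm ℝ hx) (contDiffAt_cosTheta hx), lap3_coord, lap3_norm hx] at hprod
  have horth : ∑ j, pd j (fun y => ‖y‖) x * pd j cosTheta x = 0 := by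
    simp only [pd_norm hx, pd_cosTheta hx, Fin.sum_univ_three, cosTheta, Fin.reduceEq,
      ↓reduceIte]
    field_simp
    linear_combination x 2 * norm_sq_eq_sum x
  rw [horth] at hprod
  field_simp at hprod ⊢
  linarith

variable {φ : ℝ → ℝ} (hφ : ContDiffAt ℝ 2 φ (cosTheta x))
include hφ

lemma pd_comp_cosTheta (j : Fin 3) :
    pd j (fun y => φ (cosTheta y)) x =
      deriv φ (cosTheta x) * (((if 2 = j then 1 else 0) - cosTheta x * (x j / ‖x‖)) / ‖x‖) := by
  rw [pd_comp (hφ.differentiableAt two_ne_zero)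
    ((contDiffAt_cosTheta hx).differentiableAt two_ne_zero), pd_cosTheta hx]

lemma lap3_comp_cosTheta :
    lap3 (fun y => φ (cosTheta y)) x = ((1 - cosTheta x ^ 2) * deriv (deriv φ) (cosTheta x)
      - 2 * cosTheta x * deriv φ (cosTheta x)) / ‖x‖ ^ 2 := by
  rw [lap3_comp hφ (contDiffAt_cosTheta hx), sum_pd_cosTheta_sq hx, lap3_cosTheta hx]
  ring

end CosTheta

/-! ### Contractions of the momentum equation -/

/-- The radial moment `x · u = r u_r`. -/
def radialMoment (u : V3 → V3) (x : V3) : ℝ := x 0 * u x 0 + x 1 * u x 1 + x 2 * u x 2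

/-- The moment about the third axis, `x₁ u₂ - x₂ u₁ = |x'| u_φ`. -/
def swirlMoment (u : V3 → V3) (x : V3) : ℝ := x 0 * u x 1 - x 1 * u x 0

section Moments

variable {u : V3 → V3} {x : V3} (hu : ∀ i, ContDiffAt ℝ 2 (fun y => u y i) x)
include hu

lemma pd_radialMoment (j : Fin 3) :
    pd j (radialMoment u) x = u x j + (x 0 * pd j (fun y => u y 0) x
      + x 1 * pd j (fun y => u y 1) x + x 2 * pd j (fun y => u y 2) x) := by
  have hd i := (hu i).differentiableAt two_ne_zero
  have hc (i : Fin 3) : DifferentiableAt ℝ (fun y : V3 => y i) x := by fun_prop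
  have hm i := (hc i).fun_mul (hd i)
  unfold radialMoment
  rw [pd_add ((hm 0).fun_add (hm 1)) (hm 2), pd_add (hm 0) (hm 1), pd_mul (hc 0) (hd 0),
    pd_mul (hc 1) (hd 1), pd_mul (hc 2) (hd 2), pd_coord, pd_coord, pd_coord]
  fin_cases j <;>
    simp only [Fin.zero_eta, Fin.mk_one, Fin.reduceFinMk, Fin.reduceEq, zero_ne_one, one_ne_zero,
      ↓reduceIte] <;>
    ring

lemma pd_swirlMoment (j : Fin 3) :
    pd j (swirlMoment u) x = (if 0 = j then 1 else 0) * u x 1 - (if 1 = j then 1 else 0) * u x 0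
      + (x 0 * pd j (fun y => u y 1) x - x 1 * pd j (fun y => u y 0) x) := by
  have hd i := (hu i).differentiableAt two_ne_zero
  have hc (i : Fin 3) : DifferentiableAt ℝ (fun y : V3 => y i) x := by fun_prop
  unfold swirlMoment
  rw [pd_sub ((hc 0).fun_mul (hd 1)) ((hc 1).fun_mul (hd 0)), pd_mul (hc 0) (hd 1),
    pd_mul (hc 1) (hd 0), pd_coord, pd_coord]
  ring

lemma lap3_coord_mul (i k : Fin 3) :
    lap3 (fun y => y i * u y k) x =
      x i * lap3 (fun y => u y k) x + 2 * pd i (fun y => u y k) x := by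
  rw [lap3_mul (contDiffAt_coord i x) (hu k), lap3_coord]
  simp [pd_coord]

lemma lap3_radialMoment :
    lap3 (radialMoment u) x = x 0 * lap3 (fun y => u y 0) x + x 1 * lap3 (fun y => u y 1) x
      + x 2 * lap3 (fun y => u y 2) x + 2 * ∑ j, pd j (fun y => u y j) x := by
  have hm (i k) : ContDiffAt ℝ 2 (fun y => y i * u y k) x := (contDiffAt_coord i x).mul (hu k)
  have hplanar : ContDiffAt ℝ 2 (fun y => y 0 * u y 0 + y 1 * u y 1) x := (hm 0 0).add (hm 1 1)
  unfold radialMoment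
  rw [lap3_add hplanar (hm 2 2), lap3_add (hm 0 0) (hm 1 1), lap3_coord_mul hu,
    lap3_coord_mul hu, lap3_coord_mul hu, Fin.sum_univ_three]
  ring

lemma lap3_swirlMoment :
    lap3 (swirlMoment u) x = x 0 * lap3 (fun y => u y 1) x - x 1 * lap3 (fun y => u y 0) x
      + 2 * (pd 0 (fun y => u y 1) x - pd 1 (fun y => u y 0) x) := by
  have hm (i k) : ContDiffAt ℝ 2 (fun y => y i * u y k) x := (contDiffAt_coord i x).mul (hu k)
  unfold swirlMoment
  rw [lap3_sub (hm 0 1) (hm 1 0), lap3_coord_mul hu, lap3_coord_mul hu]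
  ring

variable {p : V3 → ℝ} (hNS : NSEq u p x)
include hNS

lemma NSEq.radial_momentum :
    -lap3 (radialMoment u) x + ∑ j, u x j * pd j (radialMoment u) x - ∑ j, u x j ^ 2
      + ∑ j, x j * pd j p x = 0 := by
  obtain ⟨hmom, hdiv⟩ := hNS
  rw [lap3_radialMoment hu, hdiv]
  have h0 := hmom 0
  have h1 := hmom 1
  have h2 := hmom 2
  simp only [Fin.sum_univ_three, pd_radialMoment hu] at h0 h1 h2 ⊢
  linear_combination x 0 * h0 + x 1 * h1 + x 2 * h2

lemma NSEq.swirl_momentum :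
    -lap3 (swirlMoment u) x + 2 * (pd 0 (fun y => u y 1) x - pd 1 (fun y => u y 0) x)
      + ∑ j, u x j * pd j (swirlMoment u) x + (x 0 * pd 1 p x - x 1 * pd 0 p x) = 0 := by
  have h0 := hNS.1 0
  have h1 := hNS.1 1
  rw [lap3_swirlMoment hu]
  simp only [Fin.sum_univ_three, pd_swirlMoment hu, Fin.reduceEq, ↓reduceIte] at h0 h1 ⊢
  linear_combination x 0 * h1 - x 1 * h0

end Moments

section PlanarMoments

variable {u : V3 → V3} {x : V3} (hu : ∀ i, ContDiffAt ℝ 2 (fun y => u y i) x)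
include hu

-- Polar form of the planar divergence, written with `x · u - x₃ u₃` for the planar radial moment.
lemma sq_add_sq_mul_planar_div :
    (x 0 ^ 2 + x 1 ^ 2) * (pd 0 (fun y => u y 0) x + pd 1 (fun y => u y 1) x) =
      x 0 * (pd 0 (radialMoment u) x - x 2 * pd 0 (fun y => u y 2) x)
      + x 1 * (pd 1 (radialMoment u) x - x 2 * pd 1 (fun y => u y 2) x)
      + (x 0 * pd 1 (swirlMoment u) x - x 1 * pd 0 (swirlMoment u) x) := by
  simp only [pd_radialMoment hu, pd_swirlMoment hu, Fin.reduceEq, ↓reduceIte]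
  ring

lemma sq_add_sq_mul_planar_curl :
    (x 0 ^ 2 + x 1 ^ 2) * (pd 0 (fun y => u y 1) x - pd 1 (fun y => u y 0) x) =
      x 0 * pd 0 (swirlMoment u) x + x 1 * pd 1 (swirlMoment u) x
      - (x 0 * (pd 1 (radialMoment u) x - x 2 * pd 1 (fun y => u y 2) x)
        - x 1 * (pd 0 (radialMoment u) x - x 2 * pd 0 (fun y => u y 2) x)) := by
  simp only [pd_radialMoment hu, pd_swirlMoment hu, Fin.reduceEq, ↓reduceIte]
  ring

end PlanarMoments

/-! ### Reduction to functions of the polar angle -/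

/-- Near the point `x` of the unit sphere off the axis, the fields `x · u`, `|x'| u_φ` and `|x| u₃`
are the `C²` functions `f`, `γ` and `g` of `cos θ`. -/
structure HasProfilesAt (u : V3 → V3) (f γ g : ℝ → ℝ) (x : V3) : Prop where
  norm_eq_one : ‖x‖ = 1
  sq_lt_one : x 2 ^ 2 < 1
  contDiffAt : ∀ i, ContDiffAt ℝ 2 (fun y => u y i) x
  contDiffAt_radial : ContDiffAt ℝ 2 f (x 2)
  contDiffAt_swirl : ContDiffAt ℝ 2 γ (x 2)
  contDiffAt_axial : ContDiffAt ℝ 2 g (x 2)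
  radial_eq : radialMoment u =ᶠ[𝓝 x] fun y => f (cosTheta y)
  swirl_eq : swirlMoment u =ᶠ[𝓝 x] fun y => γ (cosTheta y)
  axial_eq : (fun y => ‖y‖ * u y 2) =ᶠ[𝓝 x] fun y => g (cosTheta y)

namespace HasProfilesAt

variable {u : V3 → V3} {f γ g : ℝ → ℝ} {x : V3} (h : HasProfilesAt u f γ g x)
include h

lemma ne_zero : x ≠ 0 := norm_ne_zero_iff.1 (h.norm_eq_one ▸ one_ne_zero)

lemma cosTheta_eq : cosTheta x = x 2 := by rw [cosTheta, h.norm_eq_one, div_one]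

lemma planar_sq : x 0 ^ 2 + x 1 ^ 2 = 1 - x 2 ^ 2 := by
  have := norm_sq_eq_sum x
  rw [h.norm_eq_one] at this
  linarith

lemma pd_profile {F : V3 → ℝ} {φ : ℝ → ℝ} (hφ : ContDiffAt ℝ 2 φ (x 2))
    (hF : F =ᶠ[𝓝 x] fun y => φ (cosTheta y)) (j : Fin 3) :
    pd j F x = deriv φ (x 2) * ((if 2 = j then 1 else 0) - x 2 * x j) := by
  rw [pd_congr hF, pd_comp_cosTheta h.ne_zero (by rwa [h.cosTheta_eq]), h.cosTheta_eq,
    h.norm_eq_one, div_one, div_one]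

lemma lap3_profile {F : V3 → ℝ} {φ : ℝ → ℝ} (hφ : ContDiffAt ℝ 2 φ (x 2))
    (hF : F =ᶠ[𝓝 x] fun y => φ (cosTheta y)) :
    lap3 F x = (1 - x 2 ^ 2) * deriv (deriv φ) (x 2) - 2 * x 2 * deriv φ (x 2) := by
  rw [lap3_congr hF, lap3_comp_cosTheta h.ne_zero (by rwa [h.cosTheta_eq]), h.cosTheta_eq,
    h.norm_eq_one, one_pow, div_one]

lemma radialMoment_eq : radialMoment u x = f (x 2) := by
  rw [h.radial_eq.eq_of_nhds, h.cosTheta_eq]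

lemma swirlMoment_eq : swirlMoment u x = γ (x 2) := by
  rw [h.swirl_eq.eq_of_nhds, h.cosTheta_eq]

lemma axial_component_eq : u x 2 = g (x 2) := by
  have := h.axial_eq.eq_of_nhds
  rwa [h.norm_eq_one, one_mul, h.cosTheta_eq] at this

lemma pd_axial (j : Fin 3) :
    pd j (fun y => u y 2) x =
      deriv g (x 2) * ((if 2 = j then 1 else 0) - x 2 * x j) - g (x 2) * x j := by
  have hprod := h.pd_profile h.contDiffAt_axial h.axial_eq j
  rw [pd_mul ((contDiffAt_norm (n := 2) ℝ h.ne_zero).differentiableAt two_ne_zero)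
    ((h.contDiffAt 2).differentiableAt two_ne_zero), pd_norm h.ne_zero, h.norm_eq_one,
    h.axial_component_eq] at hprod
  linarith

lemma lap3_axial :
    lap3 (fun y => u y 2) x =
      (1 - x 2 ^ 2) * deriv (deriv g) (x 2) - 2 * x 2 * deriv g (x 2) := by
  have hprod := h.lap3_profile h.contDiffAt_axial h.axial_eq
  rw [lap3_mul (contDiffAt_norm ℝ h.ne_zero) (h.contDiffAt 2), lap3_norm h.ne_zero,
    h.axial_component_eq, h.norm_eq_one] at hprod
  simp only [pd_norm h.ne_zero, h.pd_axial, h.norm_eq_one, Fin.sum_univ_three, Fin.reduceEq,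
    ↓reduceIte] at hprod
  linear_combination hprod + 2 * (x 2 * deriv g (x 2) + g (x 2)) * h.planar_sq

lemma one_sub_sq_mul_norm_sq :
    (1 - x 2 ^ 2) * ∑ j, u x j ^ 2 =
      (1 - x 2 ^ 2) * f (x 2) ^ 2 + (x 2 * f (x 2) - g (x 2)) ^ 2 + γ (x 2) ^ 2 := by
  rw [← h.radialMoment_eq, ← h.swirlMoment_eq, ← h.axial_component_eq, radialMoment, swirlMoment,
    Fin.sum_univ_three]
  linear_combination -(u x 0 ^ 2 + u x 1 ^ 2) * h.planar_sq

lemma planar_curl_eq :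
    pd 0 (fun y => u y 1) x - pd 1 (fun y => u y 0) x = -(x 2 * deriv γ (x 2)) := by
  have hpos : 1 - x 2 ^ 2 ≠ 0 := (sub_pos.2 h.sq_lt_one).ne'
  have hplanar := sq_add_sq_mul_planar_curl h.contDiffAt
  simp only [h.pd_profile h.contDiffAt_radial h.radial_eq,
    h.pd_profile h.contDiffAt_swirl h.swirl_eq, h.pd_axial, Fin.reduceEq, ↓reduceIte] at hplanar
  refine mul_left_cancel₀ hpos ?_
  linear_combination hplanar - (pd 0 (fun y => u y 1) x - pd 1 (fun y => u y 0) x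
    + x 2 * deriv γ (x 2)) * h.planar_sq

lemma advection_profile {F : V3 → ℝ} {φ : ℝ → ℝ} (hφ : ContDiffAt ℝ 2 φ (x 2))
    (hF : F =ᶠ[𝓝 x] fun y => φ (cosTheta y)) :
    ∑ j, u x j * pd j F x = (g (x 2) - x 2 * f (x 2)) * deriv φ (x 2) := by
  have hrad := h.radialMoment_eq
  rw [radialMoment] at hrad
  simp only [h.pd_profile hφ hF, Fin.sum_univ_three, Fin.reduceEq, ↓reduceIte]
  linear_combination deriv φ (x 2) * (h.axial_component_eq - x 2 * hrad)

variable {p : V3 → ℝ} (hNS : NSEq u p x)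
include hNS

lemma deriv_axial : deriv g (x 2) = x 2 * deriv f (x 2) := by
  have hpos : 1 - x 2 ^ 2 ≠ 0 := (sub_pos.2 h.sq_lt_one).ne'
  have hplanar := sq_add_sq_mul_planar_div h.contDiffAt
  have hdiv := hNS.2
  simp only [h.pd_profile h.contDiffAt_radial h.radial_eq,
    h.pd_profile h.contDiffAt_swirl h.swirl_eq, h.pd_axial, Fin.sum_univ_three, Fin.reduceEq,
    ↓reduceIte] at hplanar hdiv
  refine mul_left_cancel₀ hpos ?_
  linear_combination (1 - x 2 ^ 2) * hdiv - hplanar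
    + (pd 0 (fun y => u y 0) x + pd 1 (fun y => u y 1) x + x 2 * deriv f (x 2)
      - x 2 ^ 2 * deriv g (x 2) - x 2 * g (x 2)) * h.planar_sq

lemma pressure_angular :
    x 0 * pd 1 p x - x 1 * pd 0 p x =
      (1 - x 2 ^ 2) * deriv (deriv γ) (x 2) + (x 2 * f (x 2) - g (x 2)) * deriv γ (x 2) := by
  have hmom := hNS.swirl_momentum h.contDiffAt
  rw [h.lap3_profile h.contDiffAt_swirl h.swirl_eq, h.planar_curl_eq,
    h.advection_profile h.contDiffAt_swirl h.swirl_eq] at hmom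
  linear_combination hmom

lemma pressure_radial :
    ∑ j, x j * pd j p x = (1 - x 2 ^ 2) * deriv (deriv f) (x 2) - 2 * x 2 * deriv f (x 2)
      + (x 2 * f (x 2) - g (x 2)) * deriv f (x 2) + ∑ j, u x j ^ 2 := by
  have hmom := hNS.radial_momentum h.contDiffAt
  rw [h.lap3_profile h.contDiffAt_radial h.radial_eq,
    h.advection_profile h.contDiffAt_radial h.radial_eq] at hmom
  linear_combination hmom

lemma pressure_axial :
    pd 2 p x = (1 - x 2 ^ 2) * deriv (deriv g) (x 2) - 2 * x 2 * deriv g (x 2)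
      + (x 2 * f (x 2) - g (x 2)) * deriv g (x 2) + f (x 2) * g (x 2) := by
  have hmom := hNS.1 2
  have hrad := h.radialMoment_eq
  rw [radialMoment] at hrad
  simp only [h.lap3_axial, h.pd_axial, Fin.sum_univ_three, Fin.reduceEq, ↓reduceIte] at hmom
  linear_combination hmom + (x 2 * deriv g (x 2) + g (x 2)) * hrad
    - deriv g (x 2) * h.axial_component_eq

end HasProfilesAt

/-! ### Axisymmetric solutions on a cone around the axis -/

/-- The cone of the points whose polar angle satisfies `cos θ ∈ I`. -/
def polarCone (I : Set ℝ) : Set V3 := {x | x ≠ 0 ∧ cosTheta x ∈ I}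

/-- The meridian `φ = 0` of the unit sphere, parametrised by `t = cos θ`. -/
def meridian (t : ℝ) : V3 := √(1 - t ^ 2) • e3 0 + t • e3 2

lemma isOpen_polarCone {I : Set ℝ} (hI : IsOpen I) : IsOpen (polarCone I) := by
  refine isOpen_iff_mem_nhds.2 fun x hx => ?_
  have hcont := (contDiffAt_cosTheta hx.1).continuousAt
  filter_upwards [isOpen_ne.mem_nhds hx.1, hcont.preimage_mem_nhds (hI.mem_nhds hx.2)]
    with y hy₀ hy using ⟨hy₀, hy⟩

lemma meridian_zero (t : ℝ) : meridian t 0 = √(1 - t ^ 2) := by simp [meridian, e3]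

lemma meridian_one (t : ℝ) : meridian t 1 = 0 := by simp [meridian, e3]

lemma meridian_two (t : ℝ) : meridian t 2 = t := by simp [meridian, e3]

lemma one_sub_sq_pos {t : ℝ} (ht : t ∈ Set.Ioo (-1 : ℝ) 1) : 0 < 1 - t ^ 2 :=
  sub_pos.2 (sq_lt_one_iff_abs_lt_one t |>.2 (abs_lt.2 ht))

lemma norm_meridian {t : ℝ} (ht : t ∈ Set.Ioo (-1 : ℝ) 1) : ‖meridian t‖ = 1 := by
  have hsq := norm_sq_eq_sum (meridian t)
  rw [meridian_zero, meridian_one, meridian_two, Real.sq_sqrt (one_sub_sq_pos ht).le] at hsq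
  exact (pow_eq_one_iff_of_nonneg (norm_nonneg _) two_ne_zero).1 (by linarith)

lemma meridian_ne_zero {t : ℝ} (ht : t ∈ Set.Ioo (-1 : ℝ) 1) : meridian t ≠ 0 :=
  norm_ne_zero_iff.1 (norm_meridian ht ▸ one_ne_zero)

lemma cosTheta_meridian {t : ℝ} (ht : t ∈ Set.Ioo (-1 : ℝ) 1) : cosTheta (meridian t) = t := by
  rw [cosTheta, norm_meridian ht, div_one, meridian_two]

lemma cosTheta_smul {c : ℝ} (hc : 0 < c) (x : V3) : cosTheta (c • x) = cosTheta x := by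
  rw [cosTheta, cosTheta, norm_smul, Real.norm_of_nonneg hc.le, PiLp.smul_apply, smul_eq_mul,
    mul_div_mul_left _ _ hc.ne']

lemma smul_mem_polarCone {I : Set ℝ} {x : V3} (hx : x ∈ polarCone I) {c : ℝ} (hc : 0 < c) :
    c • x ∈ polarCone I :=
  ⟨smul_ne_zero hc.ne' hx.1, (cosTheta_smul hc x).symm ▸ hx.2⟩

lemma contDiffAt_meridian {t : ℝ} (ht : t ∈ Set.Ioo (-1 : ℝ) 1) : ContDiffAt ℝ 2 meridian t := by
  have hsqrt : ContDiffAt ℝ 2 (fun t => √(1 - t ^ 2)) t :=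
    ContDiffAt.sqrt (by fun_prop) (one_sub_sq_pos ht).ne'
  unfold meridian
  fun_prop

lemma hasDerivAt_meridian {t : ℝ} (ht : t ∈ Set.Ioo (-1 : ℝ) 1) :
    HasDerivAt meridian ((-(t / √(1 - t ^ 2))) • e3 0 + e3 2) t := by
  have hsq : HasDerivAt (fun t : ℝ => 1 - t ^ 2) (-(2 * t)) t := by
    simpa using (hasDerivAt_pow 2 t).const_sub 1
  have hsqrt : HasDerivAt (fun t : ℝ => √(1 - t ^ 2)) (-(t / √(1 - t ^ 2))) t := by
    refine (hsq.sqrt (one_sub_sq_pos ht).ne').congr_deriv ?_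
    rw [neg_div, mul_div_mul_left _ _ two_ne_zero]
  refine ((hsqrt.smul_const (e3 0)).add ((hasDerivAt_id' t).smul_const (e3 2))).congr_deriv ?_
  rw [one_smul]

lemma rho_sq (x : V3) : rho x ^ 2 = x 0 ^ 2 + x 1 ^ 2 := Real.sq_sqrt (by positivity)

lemma rho_sq_eq_norm_sq_mul {x : V3} (hx : x ≠ 0) :
    rho x ^ 2 = ‖x‖ ^ 2 * (1 - cosTheta x ^ 2) := by
  have h2 := norm_mul_cosTheta hx
  rw [rho_sq, mul_sub, ← mul_pow, h2, norm_sq_eq_sum]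
  ring

lemma rho_pos {x : V3} (hx : x ∈ polarCone (Set.Ioo (-1) 1)) : 0 < rho x := by
  refine (Real.sqrt_nonneg _).lt_of_ne' fun hzero : rho x = 0 => ?_
  have hsq := rho_sq_eq_norm_sq_mul hx.1
  rw [hzero] at hsq
  have := mul_pos (pow_pos (norm_pos_iff.2 hx.1) 2) (one_sub_sq_pos hx.2)
  linarith

lemma rho_mul_uPc {u : V3 → V3} {x : V3} (hx : x ∈ polarCone (Set.Ioo (-1) 1)) :
    rho x * uPc u x = swirlMoment u x := by
  rw [uPc, mul_div_cancel₀ _ (rho_pos hx).ne', swirlMoment]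
  ring

lemma norm_mul_uRc {u : V3 → V3} {x : V3} (hx : x ≠ 0) : ‖x‖ * uRc u x = radialMoment u x := by
  rw [uRc, mul_div_cancel₀ _ (norm_ne_zero_iff.2 hx), radialMoment]
  ring

-- `u₃ = cos θ u_r - sin θ u_θ`, with `|x| cos θ = x₃` and `|x| sin θ = |x'|`.
lemma rho_mul_uTc {u : V3 → V3} {x : V3} (hx : x ∈ polarCone (Set.Ioo (-1) 1)) :
    rho x * uTc u x = x 2 * uRc u x - ‖x‖ * u x 2 := by
  have hrho := (rho_pos hx).ne'
  have hnorm := norm_ne_zero_iff.2 hx.1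
  have hsq := rho_sq x
  have hnormSq := norm_sq_eq_sum x
  rw [uTc, uRc]
  field_simp
  linear_combination u x 2 * (hnormSq - hsq)

/-- `r u_r` as a function of `cos θ`. -/
def radialProfile (u : V3 → V3) (t : ℝ) : ℝ := radialMoment u (meridian t)

/-- `|x'| u_φ` as a function of `cos θ`. -/
def swirlProfile (u : V3 → V3) (t : ℝ) : ℝ := swirlMoment u (meridian t)

/-- `r u₃` as a function of `cos θ`. -/
def axialProfile (u : V3 → V3) (t : ℝ) : ℝ := u (meridian t) 2

/-- `|x'| u_θ` as a function of `cos θ`. -/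
def polarProfile (u : V3 → V3) (t : ℝ) : ℝ := t * radialProfile u t - axialProfile u t

/-- A homogeneous axisymmetric solution of the Navier–Stokes equations on the cone `cos θ ∈ I`
off the axis, for an open set `I`. -/
structure IsAxisymSolution (u : V3 → V3) (p : V3 → ℝ) (I : Set ℝ) : Prop where
  isOpen : IsOpen I
  subset_Ioo : I ⊆ Set.Ioo (-1) 1
  velocity_smul : ∀ x ∈ polarCone I, ∀ c : ℝ, 0 < c → u (c • x) = c⁻¹ • u x
  pressure_smul : ∀ x ∈ polarCone I, ∀ c : ℝ, 0 < c → p (c • x) = (c ^ 2)⁻¹ * p x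
  contDiffOn_velocity : ContDiffOn ℝ 2 u (polarCone I)
  contDiffOn_pressure : ContDiffOn ℝ 1 p (polarCone I)
  axisymOn : AxisymOn u (polarCone I)
  nsEq : ∀ x ∈ polarCone I, NSEq u p x

namespace IsAxisymSolution

variable {u : V3 → V3} {p : V3 → ℝ} {I : Set ℝ} (h : IsAxisymSolution u p I)
include h

lemma meridian_mem {t : ℝ} (ht : t ∈ I) : meridian t ∈ polarCone I :=
  ⟨meridian_ne_zero (h.subset_Ioo ht), (cosTheta_meridian (h.subset_Ioo ht)).symm ▸ ht⟩

lemma mem_Ioo {x : V3} (hx : x ∈ polarCone I) : x ∈ polarCone (Set.Ioo (-1) 1) :=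
  ⟨hx.1, h.subset_Ioo hx.2⟩

lemma contDiffAt_velocity {x : V3} (hx : x ∈ polarCone I) (i : Fin 3) :
    ContDiffAt ℝ 2 (fun y => u y i) x :=
  contDiffAt_euclidean.1
    (h.contDiffOn_velocity.contDiffAt ((isOpen_polarCone h.isOpen).mem_nhds hx)) i

lemma differentiableAt_pressure {x : V3} (hx : x ∈ polarCone I) : DifferentiableAt ℝ p x :=
  (h.contDiffOn_pressure.contDiffAt
    ((isOpen_polarCone h.isOpen).mem_nhds hx)).differentiableAt one_ne_zero

lemma eq_of_norm_eq {x y : V3} (hx : x ∈ polarCone I) (hy : y ∈ polarCone I)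
    (hnorm : ‖x‖ = ‖y‖) (hcos : cosTheta x = cosTheta y) :
    radialMoment u x = radialMoment u y ∧ swirlMoment u x = swirlMoment u y ∧ u x 2 = u y 2 := by
  have htwo : x 2 = y 2 := by rw [← norm_mul_cosTheta hx.1, ← norm_mul_cosTheta hy.1, hnorm, hcos]
  have hrho : rho x = rho y := by
    refine (pow_left_inj₀ (rho_pos (h.mem_Ioo hx)).le (rho_pos (h.mem_Ioo hy)).le two_ne_zero).1 ?_
    rw [rho_sq_eq_norm_sq_mul hx.1, rho_sq_eq_norm_sq_mul hy.1, hnorm, hcos]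
  obtain ⟨hR, hT, hP⟩ := h.axisymOn x hx y hy hnorm htwo
  refine ⟨?_, ?_, ?_⟩
  · rw [← norm_mul_uRc hx.1, ← norm_mul_uRc hy.1, hnorm, hR]
  · rw [← rho_mul_uPc (h.mem_Ioo hx), ← rho_mul_uPc (h.mem_Ioo hy), hrho, hP]
  · have hx₂ := rho_mul_uTc (u := u) (h.mem_Ioo hx)
    rw [hrho, hT, rho_mul_uTc (h.mem_Ioo hy), hR, htwo, hnorm] at hx₂
    exact mul_left_cancel₀ (norm_ne_zero_iff.2 hy.1) (by linarith)

lemma eq_profiles {x : V3} (hx : x ∈ polarCone I) :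
    radialMoment u x = radialProfile u (cosTheta x) ∧
      swirlMoment u x = swirlProfile u (cosTheta x) ∧
      ‖x‖ * u x 2 = axialProfile u (cosTheta x) := by
  have hpos : 0 < ‖x‖ := norm_pos_iff.2 hx.1
  have hm := h.meridian_mem hx.2
  have hIoo := h.subset_Ioo hx.2
  obtain ⟨hR, hS, hA⟩ := h.eq_of_norm_eq hx (smul_mem_polarCone hm hpos)
    (by rw [norm_smul, norm_norm, norm_meridian hIoo, mul_one])
    (by rw [cosTheta_smul hpos, cosTheta_meridian hIoo])
  simp only [radialMoment, swirlMoment, h.velocity_smul _ hm _ hpos, PiLp.smul_apply,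
    smul_eq_mul] at hR hS hA
  refine ⟨?_, ?_, ?_⟩
  · rw [radialMoment, hR, radialProfile, radialMoment]
    field_simp
  · rw [swirlMoment, hS, swirlProfile, swirlMoment]
    field_simp
  · rw [hA, axialProfile, mul_inv_cancel_left₀ hpos.ne']

lemma hasProfilesAt {x : V3} (hx : ‖x‖ = 1) (hmem : x 2 ∈ I) :
    HasProfilesAt u (radialProfile u) (swirlProfile u) (axialProfile u) x := by
  have hx₀ : x ≠ 0 := norm_ne_zero_iff.1 (hx ▸ one_ne_zero)
  have hxI : x ∈ polarCone I := ⟨hx₀, by rwa [cosTheta, hx, div_one]⟩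
  have hIoo := h.subset_Ioo hmem
  have hm := h.meridian_mem hmem
  have hu := h.contDiffAt_velocity hm
  have hc (i : Fin 3) := contDiffAt_coord i (meridian (x 2))
  have hnear : ∀ᶠ y in 𝓝 x, y ∈ polarCone I := (isOpen_polarCone h.isOpen).mem_nhds hxI
  refine ⟨hx, sub_pos.1 (one_sub_sq_pos hIoo), h.contDiffAt_velocity hxI,
    ContDiffAt.comp (x 2) (g := radialMoment u) ?_ (contDiffAt_meridian hIoo),
    ContDiffAt.comp (x 2) (g := swirlMoment u) ?_ (contDiffAt_meridian hIoo),
    ContDiffAt.comp (x 2) (g := fun y => u y 2) (hu 2) (contDiffAt_meridian hIoo),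
    hnear.mono fun y hy => (h.eq_profiles hy).1, hnear.mono fun y hy => (h.eq_profiles hy).2.1,
    hnear.mono fun y hy => (h.eq_profiles hy).2.2⟩
  · exact (((hc 0).mul (hu 0)).add ((hc 1).mul (hu 1))).add ((hc 2).mul (hu 2))
  · exact ((hc 0).mul (hu 1)).sub ((hc 1).mul (hu 0))

lemma hasProfilesAt_meridian {t : ℝ} (ht : t ∈ I) :
    HasProfilesAt u (radialProfile u) (swirlProfile u) (axialProfile u) (meridian t) :=
  h.hasProfilesAt (norm_meridian (h.subset_Ioo ht)) (by rwa [meridian_two])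

end IsAxisymSolution

/-! ### The pressure on the meridian -/

lemma fderiv_eq_sum_pd (F : V3 → ℝ) (x v : V3) : fderiv ℝ F x v = ∑ j, v j * pd j F x := by
  have hv : v = ∑ j, v j • e3 j := by
    ext i
    simp [e3, Pi.single_apply]
  conv_lhs => rw [hv, map_sum]
  simp only [map_smul, smul_eq_mul, pd]

-- The derivative along a circle of latitude integrates to zero over a full turn.
lemma eq_zero_of_latitude_derivative_eq {p : V3 → ℝ} {r z κ : ℝ}
    (hp : ∀ x : V3, x 0 ^ 2 + x 1 ^ 2 = r ^ 2 → x 2 = z →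
      DifferentiableAt ℝ p x ∧ x 0 * pd 1 p x - x 1 * pd 0 p x = κ) : κ = 0 := by
  let latitude (φ : ℝ) : V3 := (r * cos φ) • e3 0 + (r * sin φ) • e3 1 + z • e3 2
  have hcoord (φ) : latitude φ 0 = r * cos φ ∧ latitude φ 1 = r * sin φ ∧ latitude φ 2 = z := by
    simp [latitude, e3]
  have hlatitude (φ) :
      HasDerivAt latitude ((r * -sin φ) • e3 0 + (r * cos φ) • e3 1) φ :=
    ((((hasDerivAt_cos φ).const_mul r).smul_const (e3 0)).add
      (((hasDerivAt_sin φ).const_mul r).smul_const (e3 1))).add_const _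
  have hderiv (φ) : HasDerivAt (fun φ => p (latitude φ)) κ φ := by
    obtain ⟨h0, h1, h2⟩ := hcoord φ
    obtain ⟨hdiff, hκ⟩ := hp (latitude φ) (by
      rw [h0, h1]; linear_combination r ^ 2 * sin_sq_add_cos_sq φ) h2
    refine (hdiff.hasFDerivAt.comp_hasDerivAt φ (hlatitude φ)).congr_deriv ?_
    rw [map_add, map_smul, map_smul, ← hκ, h0, h1]
    simp only [smul_eq_mul, pd]
    ring
  obtain ⟨-, -, hκ⟩ := exists_hasDerivAt_eq_zero (f := fun φ => p (latitude φ)) two_pi_pos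
    (fun φ _ => (hderiv φ).continuousAt.continuousWithinAt) (by simp [latitude])
    fun φ _ => hderiv φ
  exact hκ

lemma sum_mul_pd_of_homogeneous {p : V3 → ℝ} {x : V3} (hp : DifferentiableAt ℝ p x)
    (hhom : ∀ c : ℝ, 0 < c → p (c • x) = (c ^ 2)⁻¹ * p x) :
    ∑ j, x j * pd j p x = -2 * p x := by
  have hray : HasDerivAt (fun c : ℝ => p (c • x)) (fderiv ℝ p x x) 1 := by
    have hline : HasDerivAt (fun c : ℝ => c • x) x 1 := by
      simpa using (hasDerivAt_id (1 : ℝ)).smul_const x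
    exact HasFDerivAt.comp_hasDerivAt (1 : ℝ)
      (by simpa using hp.hasFDerivAt : HasFDerivAt p (fderiv ℝ p x) ((1 : ℝ) • x)) hline
  have hpow : HasDerivAt (fun c : ℝ => (c ^ 2)⁻¹ * p x) (-2 * p x) 1 := by
    simpa using ((hasDerivAt_pow 2 (1 : ℝ)).fun_inv (by simp)).mul_const (p x)
  rw [← fderiv_eq_sum_pd]
  exact hray.unique (hpow.congr_of_eventuallyEq
    ((lt_mem_nhds one_pos).mono fun c hc => hhom c hc))

lemma exists_hasDerivAt_comp_meridian {p : V3 → ℝ} {t : ℝ} (ht : t ∈ Set.Ioo (-1 : ℝ) 1)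
    (hp : DifferentiableAt ℝ p (meridian t))
    (hhom : ∀ c : ℝ, 0 < c → p (c • meridian t) = (c ^ 2)⁻¹ * p (meridian t)) :
    ∃ P', HasDerivAt (fun t => p (meridian t)) P' t ∧
      pd 2 p (meridian t) = (1 - t ^ 2) * P' - 2 * t * p (meridian t) := by
  have hsqrt := (Real.sqrt_pos.2 (one_sub_sq_pos ht)).ne'
  have hsq := Real.sq_sqrt (one_sub_sq_pos ht).le
  refine ⟨_, hp.hasFDerivAt.comp_hasDerivAt t (hasDerivAt_meridian ht), ?_⟩
  have heuler := sum_mul_pd_of_homogeneous hp hhom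
  rw [Fin.sum_univ_three, meridian_zero, meridian_one, meridian_two] at heuler
  rw [map_add, map_smul, smul_eq_mul]
  change _ = (1 - t ^ 2) * (-(t / √(1 - t ^ 2)) * pd 0 p _ + pd 2 p _) - _
  have hsqrtMul : (1 - t ^ 2) * (t / √(1 - t ^ 2)) = t * √(1 - t ^ 2) := by
    nth_rw 1 [← hsq]
    field_simp
  linear_combination t * heuler + pd 0 p (meridian t) * hsqrtMul

/-! ### The system of ordinary differential equations -/

/-- The derivative of `reducedHead` along a solution. -/
def headDeriv (u : V3 → V3) (t : ℝ) : ℝ :=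
  (1 - t ^ 2) * deriv (radialProfile u) t + polarProfile u t * radialProfile u t
    + 2 * polarProfile u t

/-- The second derivative of `reducedHead` along a solution; it is twice the difference of the
radial profile and the Bernoulli function `p + (u_θ² + u_φ²) / 2`. -/
def headDeriv₂ (u : V3 → V3) (p : V3 → ℝ) (t : ℝ) : ℝ :=
  2 * radialProfile u t - 2 * p (meridian t)
    - (polarProfile u t ^ 2 + swirlProfile u t ^ 2) / (1 - t ^ 2)

namespace IsAxisymSolution

variable {u : V3 → V3} {p : V3 → ℝ} {I : Set ℝ} (h : IsAxisymSolution u p I)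
  {t : ℝ} (ht : t ∈ I)
include h ht

lemma contDiffAt_radialProfile : ContDiffAt ℝ 2 (radialProfile u) t :=
  meridian_two t ▸ (h.hasProfilesAt_meridian ht).contDiffAt_radial

lemma contDiffAt_swirlProfile : ContDiffAt ℝ 2 (swirlProfile u) t :=
  meridian_two t ▸ (h.hasProfilesAt_meridian ht).contDiffAt_swirl

lemma contDiffAt_axialProfile : ContDiffAt ℝ 2 (axialProfile u) t :=
  meridian_two t ▸ (h.hasProfilesAt_meridian ht).contDiffAt_axial

lemma deriv_axialProfile : deriv (axialProfile u) t = t * deriv (radialProfile u) t := by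
  simpa only [meridian_two] using
    (h.hasProfilesAt_meridian ht).deriv_axial (h.nsEq _ (h.meridian_mem ht))

lemma hasDerivAt_radialProfile :
    HasDerivAt (radialProfile u) (deriv (radialProfile u) t) t :=
  ((h.contDiffAt_radialProfile ht).differentiableAt two_ne_zero).hasDerivAt

lemma hasDerivAt_deriv_radialProfile :
    HasDerivAt (deriv (radialProfile u)) (deriv (deriv (radialProfile u)) t) t :=
  (differentiableAt_deriv_of_contDiffAt_two (h.contDiffAt_radialProfile ht)).hasDerivAt

lemma hasDerivAt_swirlProfile : HasDerivAt (swirlProfile u) (deriv (swirlProfile u) t) t :=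
  ((h.contDiffAt_swirlProfile ht).differentiableAt two_ne_zero).hasDerivAt

lemma deriv_deriv_axialProfile :
    deriv (deriv (axialProfile u)) t =
      deriv (radialProfile u) t + t * deriv (deriv (radialProfile u)) t := by
  have hnear : deriv (axialProfile u) =ᶠ[𝓝 t] fun t => t * deriv (radialProfile u) t :=
    (h.isOpen.eventually_mem ht).mono fun s hs => h.deriv_axialProfile hs
  rw [hnear.deriv_eq, ((hasDerivAt_id' t).fun_mul (h.hasDerivAt_deriv_radialProfile ht)).deriv,
    one_mul]

lemma hasDerivAt_polarProfile : HasDerivAt (polarProfile u) (radialProfile u t) t := by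
  have hf := h.hasDerivAt_radialProfile ht
  have hg := ((h.contDiffAt_axialProfile ht).differentiableAt two_ne_zero).hasDerivAt
  refine (((hasDerivAt_id' t).mul hf).sub hg).congr_deriv ?_
  rw [h.deriv_axialProfile ht]
  ring

lemma swirlProfile_ode :
    (1 - t ^ 2) * deriv (deriv (swirlProfile u)) t
      + polarProfile u t * deriv (swirlProfile u) t = 0 := by
  have hpos := one_sub_sq_pos (h.subset_Ioo ht)
  refine eq_zero_of_latitude_derivative_eq (p := p) (r := √(1 - t ^ 2)) (z := t) fun x hx hx₂ => ?_
  have hnorm : ‖x‖ = 1 := by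
    have hsq := norm_sq_eq_sum x
    rw [hx, hx₂, Real.sq_sqrt hpos.le, sub_add_cancel] at hsq
    exact (pow_eq_one_iff_of_nonneg (norm_nonneg x) two_ne_zero).1 hsq
  have hprof := h.hasProfilesAt hnorm (hx₂ ▸ ht)
  have hmem : x ∈ polarCone I := ⟨hprof.ne_zero, by rwa [hprof.cosTheta_eq, hx₂]⟩
  refine ⟨h.differentiableAt_pressure hmem, ?_⟩
  rw [hprof.pressure_angular (h.nsEq x hmem), hx₂, polarProfile]

lemma hasDerivAt_deriv_swirlProfile :
    HasDerivAt (deriv (swirlProfile u))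
      (-(polarProfile u t / (1 - t ^ 2) * deriv (swirlProfile u) t)) t := by
  have hpos := (one_sub_sq_pos (h.subset_Ioo ht)).ne'
  refine (differentiableAt_deriv_of_contDiffAt_two
    (h.contDiffAt_swirlProfile ht)).hasDerivAt.congr_deriv ?_
  field_simp
  linear_combination h.swirlProfile_ode ht

lemma pressure_meridian :
    (1 - t ^ 2) * (-2 * p (meridian t)) = (1 - t ^ 2) * ((1 - t ^ 2)
      * deriv (deriv (radialProfile u)) t - 2 * t * deriv (radialProfile u) t
      + polarProfile u t * deriv (radialProfile u) t + radialProfile u t ^ 2)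
      + polarProfile u t ^ 2 + swirlProfile u t ^ 2 := by
  have hmem := h.meridian_mem ht
  have hprof := h.hasProfilesAt_meridian ht
  have hnorm := hprof.one_sub_sq_mul_norm_sq
  rw [← sum_mul_pd_of_homogeneous (h.differentiableAt_pressure hmem) (h.pressure_smul _ hmem),
    hprof.pressure_radial (h.nsEq _ hmem)]
  rw [meridian_two] at hnorm ⊢
  rw [polarProfile]
  linear_combination hnorm

lemma exists_hasDerivAt_pressure :
    ∃ P', HasDerivAt (fun t => p (meridian t)) P' t ∧
      (1 - t ^ 2) ^ 2 * P' = (1 - t ^ 2) ^ 2 * deriv (radialProfile u) t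
        - (1 - t ^ 2) * radialProfile u t * polarProfile u t
        - t * (polarProfile u t ^ 2 + swirlProfile u t ^ 2) := by
  have hmem := h.meridian_mem ht
  have hprof := h.hasProfilesAt_meridian ht
  obtain ⟨P', hP', hpd⟩ := exists_hasDerivAt_comp_meridian (h.subset_Ioo ht)
    (h.differentiableAt_pressure hmem) (h.pressure_smul _ hmem)
  refine ⟨P', hP', ?_⟩
  have haxial := hprof.pressure_axial (h.nsEq _ hmem)
  have hradial := h.pressure_meridian ht
  rw [hpd, meridian_two, h.deriv_deriv_axialProfile ht,
    h.deriv_axialProfile ht] at haxial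
  rw [polarProfile] at hradial ⊢
  linear_combination (1 - t ^ 2) * haxial - t * hradial

lemma hasDerivAt_reducedHead :
    HasDerivAt (fun t => (1 - t ^ 2) * radialProfile u t + 2 * t * polarProfile u t
      + polarProfile u t ^ 2 / 2) (headDeriv u t) t := by
  have hf := h.hasDerivAt_radialProfile ht
  have hU := h.hasDerivAt_polarProfile ht
  refine ((((hasDerivAt_pow 2 t).const_sub 1).mul hf).add
    (((hasDerivAt_id' t).const_mul 2).mul hU) |>.add ((hU.pow 2).div_const 2)).congr_deriv ?_
  rw [headDeriv]
  simp only [Nat.cast_ofNat, Nat.add_one_sub_one, pow_one, neg_mul, mul_one]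
  ring

lemma hasDerivAt_headDeriv : HasDerivAt (headDeriv u) (headDeriv₂ u p t) t := by
  have hpos := (one_sub_sq_pos (h.subset_Ioo ht)).ne'
  have hf := h.hasDerivAt_radialProfile ht
  have hf' := h.hasDerivAt_deriv_radialProfile ht
  have hU := h.hasDerivAt_polarProfile ht
  refine (((((hasDerivAt_pow 2 t).const_sub 1).mul hf').add (hU.mul hf)).add
    (hU.const_mul 2)).congr_deriv ?_
  have hp := h.pressure_meridian ht
  rw [headDeriv₂]
  field_simp
  simp only [Nat.cast_ofNat, Nat.add_one_sub_one, pow_one]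
  linear_combination -hp

lemma hasDerivAt_headDeriv₂ :
    HasDerivAt (headDeriv₂ u p)
      (-(2 * swirlProfile u t * deriv (swirlProfile u) t / (1 - t ^ 2))) t := by
  have hpos := (one_sub_sq_pos (h.subset_Ioo ht)).ne'
  have hf := h.hasDerivAt_radialProfile ht
  have hγ := h.hasDerivAt_swirlProfile ht
  have hU := h.hasDerivAt_polarProfile ht
  obtain ⟨P', hP', hP'eq⟩ := h.exists_hasDerivAt_pressure ht
  refine (((hf.const_mul 2).sub (hP'.const_mul 2)).sub (((hU.pow 2).add (hγ.pow 2)).div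
    ((hasDerivAt_pow 2 t).const_sub 1) hpos)).congr_deriv ?_
  field_simp
  simp only [Nat.cast_ofNat, Nat.add_one_sub_one, pow_one, Pi.add_apply, Pi.pow_apply,
    sub_neg_eq_add]
  linear_combination -2 * hP'eq

end IsAxisymSolution

/-! ### Passage to the south pole -/

lemma tendsto_sub_one_nhdsGT_zero : Tendsto (fun s : ℝ => s - 1) (𝓝[>] 0) (𝓝[>] (-1)) := by
  refine tendsto_nhdsWithin_iff.2 ⟨?_, ?_⟩
  · simpa only [zero_sub] using tendsto_id_nhdsGT_zero.sub_const 1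
  · filter_upwards [self_mem_nhdsWithin] with s (hs : 0 < s)
    exact Set.mem_Ioi.2 (by linarith)

theorem IsAxisymSolution.nearPoleSystem {u : V3 → V3} {p : V3 → ℝ} {I : Set ℝ}
    (h : IsAxisymSolution u p I) (hI : I ∈ 𝓝[>] (-1)) {τ : ℝ}
    (hτ : Tendsto (polarProfile u) (𝓝[>] (-1)) (𝓝 τ)) :
    NearPoleSystem τ (fun s => polarProfile u (s - 1)) (fun s => radialProfile u (s - 1))
      (fun s => swirlProfile u (s - 1)) (fun s => deriv (swirlProfile u) (s - 1))
      (fun s => headDeriv u (s - 1)) (fun s => headDeriv₂ u p (s - 1)) := by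
  have hnear : ∀ᶠ s in 𝓝[>] (0 : ℝ), s - 1 ∈ I := tendsto_sub_one_nhdsGT_zero.eventually_mem hI
  have hsq (s : ℝ) : 1 - (s - 1) ^ 2 = s * (2 - s) := by ring
  have hhead : reducedHead (fun s => polarProfile u (s - 1)) (fun s => radialProfile u (s - 1)) =
      fun s => (1 - (s - 1) ^ 2) * radialProfile u (s - 1)
        + 2 * (s - 1) * polarProfile u (s - 1) + polarProfile u (s - 1) ^ 2 / 2 := by
    funext s
    rw [reducedHead, hsq]
  exact {
    hasDerivAt_polar := hnear.mono fun s hs => (h.hasDerivAt_polarProfile hs).comp_sub_const s 1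
    hasDerivAt_head := hnear.mono fun s hs =>
      hhead ▸ (h.hasDerivAt_reducedHead hs).comp_sub_const s 1
    hasDerivAt_head₁ := hnear.mono fun s hs => (h.hasDerivAt_headDeriv hs).comp_sub_const s 1
    hasDerivAt_head₂ := hnear.mono fun s hs =>
      hsq s ▸ (h.hasDerivAt_headDeriv₂ hs).comp_sub_const s 1
    hasDerivAt_swirl := hnear.mono fun s hs => (h.hasDerivAt_swirlProfile hs).comp_sub_const s 1
    hasDerivAt_swirl' := hnear.mono fun s hs =>
      hsq s ▸ (h.hasDerivAt_deriv_swirlProfile hs).comp_sub_const s 1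
    tendsto_polar := hτ.comp tendsto_sub_one_nhdsGT_zero }

lemma S3_two : S3 2 = -1 := by simp [S3]

lemma norm_sub_S3_sq {x : V3} (hx : ‖x‖ = 1) : ‖x - S3‖ ^ 2 = 2 * (1 + x 2) := by
  have hsq := norm_sq_eq_sum x
  rw [hx] at hsq
  rw [norm_sq_eq_sum]
  simp only [S3, PiLp.sub_apply, PiLp.single_apply, Fin.reduceEq, ↓reduceIte]
  linear_combination -hsq

lemma neg_one_lt_coord {x : V3} (hx : x ∈ sphere2 \ {S3}) : -1 < x 2 := by
  have hsq := norm_sub_S3_sq (mem_sphere_zero_iff_norm.1 hx.1)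
  have hpos := pow_pos (norm_pos_iff.2 (sub_ne_zero.2 hx.2)) 2
  linarith

lemma cosTheta_of_mem_sphere2 {x : V3} (hx : x ∈ sphere2) : cosTheta x = x 2 := by
  rw [cosTheta, mem_sphere_zero_iff_norm.1 hx, div_one]

/-- The values of `cos θ` on the cap `NSCap δ`, the north pole excluded. -/
def capInterval (δ : ℝ) : Set ℝ := Set.Ioo (-1) (min 1 (-1 + δ ^ 2 / 2))

lemma capInterval_mem_nhdsGT {δ : ℝ} (hδ : 0 < δ) : capInterval δ ∈ 𝓝[>] (-1) :=
  Ioo_mem_nhdsGT (lt_min (by norm_num) (lt_add_of_pos_right _ (by positivity)))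

lemma polarCone_capInterval_subset {δ : ℝ} (hδ : 0 < δ) :
    polarCone (capInterval δ) ⊆ cone3 (NSCap δ) := by
  rintro x ⟨hx, hlower, hupper⟩
  have hnorm : ‖‖x‖⁻¹ • x‖ = 1 := by
    rw [norm_smul, norm_inv, norm_norm, inv_mul_cancel₀ (norm_ne_zero_iff.2 hx)]
  have hcos : (‖x‖⁻¹ • x) 2 = cosTheta x := by
    rw [PiLp.smul_apply, smul_eq_mul, cosTheta, inv_mul_eq_div]
  refine ⟨hx, ⟨mem_sphere_zero_iff_norm.2 hnorm, ?_⟩, fun hS => ?_⟩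
  · rw [mem_ball, dist_eq_norm]
    refine lt_of_pow_lt_pow_left₀ 2 hδ.le ?_
    rw [norm_sub_S3_sq hnorm, hcos]
    linarith [hupper.trans_le (min_le_right _ _)]
  · rw [Set.mem_singleton_iff.1 hS, S3_two] at hcos
    linarith

theorem isAxisymSolution_capInterval {δ : ℝ} (hδ : 0 < δ) {u : V3 → V3} {p : V3 → ℝ}
    (hu_hom : ∀ x ∈ cone3 (NSCap δ), ∀ c : ℝ, 0 < c → u (c • x) = c⁻¹ • u x)
    (hp_hom : ∀ x ∈ cone3 (NSCap δ), ∀ c : ℝ, 0 < c → p (c • x) = (c ^ 2)⁻¹ * p x)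
    (hu_reg : ContDiffOn ℝ 2 u (cone3 (NSCap δ)))
    (hp_reg : ContDiffOn ℝ 1 p (cone3 (NSCap δ)))
    (haxi : AxisymOn u (cone3 (NSCap δ)))
    (hNS : ∀ x ∈ cone3 (NSCap δ), NSEq u p x) :
    IsAxisymSolution u p (capInterval δ) :=
  have hsub := polarCone_capInterval_subset hδ
  { isOpen := isOpen_Ioo
    subset_Ioo := Set.Ioo_subset_Ioo_right (min_le_left _ _)
    velocity_smul := fun x hx => hu_hom x (hsub hx)
    pressure_smul := fun x hx => hp_hom x (hsub hx)
    contDiffOn_velocity := hu_reg.mono hsub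
    contDiffOn_pressure := hp_reg.mono hsub
    axisymOn := fun x hx y hy => haxi x (hsub hx) y (hsub hy)
    nsEq := fun x hx => hNS x (hsub hx) }

lemma meridian_neg_one : meridian (-1) = S3 := by
  ext i
  fin_cases i <;> simp [meridian, S3, e3]

lemma tendsto_meridian : Tendsto meridian (𝓝[>] (-1)) (𝓝[sphere2 \ {S3}] S3) := by
  refine tendsto_nhdsWithin_iff.2 ⟨?_, ?_⟩
  · have hcont : Continuous meridian := by
      unfold meridian
      fun_prop
    exact meridian_neg_one ▸ hcont.continuousAt.mono_left nhdsWithin_le_nhds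
  · filter_upwards [Ioo_mem_nhdsGT (by norm_num : (-1 : ℝ) < 1)] with t ht
    refine ⟨mem_sphere_zero_iff_norm.2 (norm_meridian ht), fun hS => ht.1.ne' ?_⟩
    rw [← meridian_two t, Set.mem_singleton_iff.1 hS, S3_two]

lemma tendsto_polarProfile {u : V3 → V3} {τ : ℝ}
    (hτ : Tendsto (fun x => rho x * uTc u x) (𝓝[sphere2 \ {S3}] S3) (𝓝 τ)) :
    Tendsto (polarProfile u) (𝓝[>] (-1)) (𝓝 τ) := by
  refine (hτ.comp tendsto_meridian).congr' ?_
  filter_upwards [Ioo_mem_nhdsGT (by norm_num : (-1 : ℝ) < 1)] with t ht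
  have hmem := meridian_ne_zero ht
  have hradial := norm_mul_uRc (u := u) hmem
  rw [norm_meridian ht, one_mul] at hradial
  rw [Function.comp_apply, rho_mul_uTc ⟨hmem, (cosTheta_meridian ht).symm ▸ ht⟩,
    norm_meridian ht, one_mul, hradial, meridian_two, polarProfile, radialProfile, axialProfile]

lemma tendsto_one_add_coord :
    Tendsto (fun x : V3 => 1 + x 2) (𝓝[sphere2 \ {S3}] S3) (𝓝[>] 0) := by
  refine tendsto_nhdsWithin_iff.2 ⟨?_, ?_⟩
  · have hcont : Continuous fun x : V3 => 1 + x 2 := by fun_prop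
    have hlim := hcont.tendsto S3
    rw [S3_two, add_neg_cancel] at hlim
    exact hlim.mono_left nhdsWithin_le_nhds
  · filter_upwards [self_mem_nhdsWithin] with x hx
    exact neg_lt_iff_pos_add'.1 (neg_one_lt_coord hx)

lemma eventually_mem_polarCone {I : Set ℝ} (hI : I ∈ 𝓝[>] (-1)) :
    ∀ᶠ x in 𝓝[sphere2 \ {S3}] S3, ‖x‖ = 1 ∧ x ∈ polarCone I := by
  filter_upwards [(tendsto_sub_one_nhdsGT_zero.comp tendsto_one_add_coord).eventually_mem hI,
    self_mem_nhdsWithin] with x hxI hx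
  rw [Function.comp_apply, add_sub_cancel_left, ← cosTheta_of_mem_sphere2 hx.1] at hxI
  have hnorm := mem_sphere_zero_iff_norm.1 hx.1
  exact ⟨hnorm, norm_ne_zero_iff.1 (hnorm ▸ one_ne_zero), hxI⟩

namespace IsAxisymSolution

variable {u : V3 → V3} {p : V3 → ℝ} {I : Set ℝ} (h : IsAxisymSolution u p I) (hI : I ∈ 𝓝[>] (-1))
include h hI

lemma eventually_rho_mul_uPc_eq :
    ∀ᶠ x in 𝓝[sphere2 \ {S3}] S3, rho x * uPc u x = swirlProfile u (1 + x 2 - 1) := by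
  filter_upwards [eventually_mem_polarCone hI, self_mem_nhdsWithin] with x hx hxS
  rw [rho_mul_uPc (h.mem_Ioo hx.2), (h.eq_profiles hx.2).2.1, cosTheta_of_mem_sphere2 hxS.1,
    add_sub_cancel_left]

lemma eventually_uRc_eq :
    ∀ᶠ x in 𝓝[sphere2 \ {S3}] S3, uRc u x = radialProfile u (1 + x 2 - 1) := by
  filter_upwards [eventually_mem_polarCone hI, self_mem_nhdsWithin] with x hx hxS
  have hradial := norm_mul_uRc (u := u) hx.2.1
  rwa [hx.1, one_mul, (h.eq_profiles hx.2).1, cosTheta_of_mem_sphere2 hxS.1,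
    ← add_sub_cancel_left (1 : ℝ) (x 2)] at hradial

end IsAxisymSolution

-- On the sphere `|x'|² = s (2 - s)` with `s = 1 + x₃`.
lemma tendsto_rho_rpow_mul {φ : ℝ → ℝ} {a b L : ℝ} (hab : b = 2 * a)
    (hφ : Tendsto (fun s => s ^ a * φ s) (𝓝[>] 0) (𝓝 L)) :
    Tendsto (fun x => rho x ^ b * φ (1 + x 2)) (𝓝[sphere2 \ {S3}] S3) (𝓝 (2 ^ a * L)) := by
  have hlim : Tendsto (fun s => (2 - s) ^ a * (s ^ a * φ s)) (𝓝[>] 0) (𝓝 (2 ^ a * L)) :=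
    (tendsto_two_sub_nhdsGT_zero.rpow_const (Or.inl two_ne_zero)).mul hφ
  refine (hlim.comp tendsto_one_add_coord).congr' ?_
  filter_upwards [eventually_mem_polarCone (Ioo_mem_nhdsGT (by norm_num : (-1 : ℝ) < 1)),
    self_mem_nhdsWithin, tendsto_one_add_coord.eventually eventually_two_sub_pos]
    with x ⟨hnorm, hx⟩ hxS ⟨hs, hs'⟩
  have hrho : rho x ^ 2 = (2 - (1 + x 2)) * (1 + x 2) := by
    rw [rho_sq_eq_norm_sq_mul hx.1, hnorm, cosTheta_of_mem_sphere2 hxS.1]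
    ring
  rw [Function.comp_apply, ← mul_assoc, ← Real.mul_rpow hs'.le hs.le, ← hrho, hab,
    Real.rpow_mul (rho_pos hx).le, Real.rpow_two]

lemma eventually_rho_pos : ∀ᶠ x in 𝓝[sphere2 \ {S3}] S3, 0 < rho x :=
  (eventually_mem_polarCone (Ioo_mem_nhdsGT (by norm_num : (-1 : ℝ) < 1))).mono
    fun _ hx => rho_pos hx.2

/-- expansion when `2 < τ < 3`. -/
theorem expansion_tau_between_two_three (δ : ℝ) (hδ : 0 < δ) (u : V3 → V3) (p : V3 → ℝ)
    (hu_hom : ∀ x ∈ cone3 (NSCap δ), ∀ lam : ℝ, 0 < lam → u (lam • x) = lam⁻¹ • u x)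
    (hp_hom : ∀ x ∈ cone3 (NSCap δ), ∀ lam : ℝ, 0 < lam → p (lam • x) = (lam ^ 2)⁻¹ * p x)
    (hu_reg : ContDiffOn ℝ 2 u (cone3 (NSCap δ)))
    (hp_reg : ContDiffOn ℝ 1 p (cone3 (NSCap δ)))
    (haxi : AxisymOn u (cone3 (NSCap δ)))
    (hNS : ∀ x ∈ cone3 (NSCap δ), NSEq u p x)
    (τ : ℝ) (hτ : Tendsto (fun x => rho x * uTc u x) (𝓝[sphere2 \ {S3}] S3) (𝓝 τ))
    (hτl : 2 < τ) (hτu : τ < 3) :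
    ((∃ c : ℝ, ∀ᶠ x in 𝓝[sphere2 \ {S3}] S3, rho x * uPc u x = c) ∨
      (∃ L : ℝ, L ≠ 0 ∧
        Tendsto (fun x => rho x ^ (τ - 1) * uPc u x) (𝓝[sphere2 \ {S3}] S3) (𝓝 L))) ∧
    (∃ L2 : ℝ, Tendsto (fun x => rho x ^ (2 * τ - 4) * uRc u x)
      (𝓝[sphere2 \ {S3}] S3) (𝓝 L2)) := by
  have hcap := capInterval_mem_nhdsGT hδ
  have hsol := isAxisymSolution_capInterval hδ hu_hom hp_hom hu_reg hp_reg haxi hNS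
  have hsystem := hsol.nearPoleSystem hcap (tendsto_polarProfile hτ)
  have hswirl := hsol.eventually_rho_mul_uPc_eq hcap
  constructor
  · refine (hsystem.swirl_eq_const_or_tendsto hτl hτu).imp ?_ ?_
    · rintro ⟨c, hc⟩
      refine ⟨c, ?_⟩
      filter_upwards [hswirl, tendsto_one_add_coord.eventually hc] with x hx hxc using hx.trans hxc
    · rintro ⟨L, hL, hlim⟩
      refine ⟨2 ^ (τ / 2 - 1) * L, mul_ne_zero (by positivity) hL,
        (tendsto_rho_rpow_mul (b := τ - 2) (by ring) hlim).congr' ?_⟩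
      filter_upwards [hswirl, eventually_rho_pos] with x hx hpos
      rw [← hx, ← mul_assoc, ← Real.rpow_add_one hpos.ne']
      ring_nf
  · obtain ⟨L, hlim⟩ := hsystem.exists_tendsto_rpow_mul_radial hτl hτu
    refine ⟨2 ^ (τ - 2) * L, (tendsto_rho_rpow_mul (b := 2 * τ - 4) (by ring) hlim).congr' ?_⟩
    filter_upwards [hsol.eventually_uRc_eq hcap] with x hx
    rw [hx]
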